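/- Let u be a monotone traveling wave solution of the balanced Allen-Cahn equation in the plane, and let C₁, C₂ be the constants in the logarithmic asymptotics of the two branches k₁, k₂ of its zero level set (k₁(y) = −(1/(2μ)) ln y + C₁ + o(1), k₂(y) = (1/(2μ)) ln y + C₂ + o(1) as y → ∞, with μ = √(F''(1))). Then the critical moving-plane position Λ := inf{ λ ∈ ℝ : u(2λ − x, y) > u(x,y) for all x > λ, y ∈ ℝ } satisfies Λ = (C₁ + C₂)/2. -/

import Mathlib

open Real Filter MeasureTheory Metric

noncomputable def pdx (u : ℝ → ℝ → ℝ) (x y : ℝ) : ℝ := deriv (fun t => u t y) x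

noncomputable def pdy (u : ℝ → ℝ → ℝ) (x y : ℝ) : ℝ := deriv (fun t => u x t) y

noncomputable def pdxx (u : ℝ → ℝ → ℝ) (x y : ℝ) : ℝ := deriv (fun t => pdx u t y) x

noncomputable def pdyy (u : ℝ → ℝ → ℝ) (x y : ℝ) : ℝ := deriv (fun t => pdy u x t) y

/-- `F` is a balanced double-well potential. -/
def BalancedDoubleWell (F : ℝ → ℝ) : Prop :=
  ContDiff ℝ 3 F ∧ deriv F (-1) = 0 ∧ deriv F 1 = 0 ∧
  0 < deriv (deriv F) (-1) ∧ 0 < deriv (deriv F) 1 ∧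
  (∀ s ∈ Set.Ioo (-1 : ℝ) 0, 0 < deriv F s) ∧
  (∀ s ∈ Set.Ioo (0 : ℝ) 1, deriv F s < 0) ∧
  F (-1) = 0 ∧ F 1 = 0

/-- `u` is a `C³` solution of `Δu + c uᵧ = F'(u)` on `ℝ²` with `|u| ≤ 1`
which is monotone in `y`. -/
def IsSolution (F : ℝ → ℝ) (c : ℝ) (u : ℝ → ℝ → ℝ) : Prop :=
  ContDiff ℝ 3 (fun p : ℝ × ℝ => u p.1 p.2) ∧
  (∀ x y : ℝ, pdxx u x y + pdyy u x y + c * pdy u x y = deriv F (u x y)) ∧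
  (∀ x y : ℝ, |u x y| ≤ 1) ∧
  (∀ x y : ℝ, 0 < pdy u x y)

/-- A monotone traveling wave solution connecting `-1` to `1`. -/
def IsTravelingWave (F : ℝ → ℝ) (c : ℝ) (u : ℝ → ℝ → ℝ) : Prop :=
  IsSolution F c u ∧
  (∀ x : ℝ, Tendsto (fun y => u x y) atTop (nhds 1)) ∧
  (∀ x : ℝ, Tendsto (fun y => u x y) atBot (nhds (-1)))

/-!
Bounded solutions have interior derivative bounds, obtained by doubling variables in a penalised
maximum principle, so translates of a wave subconverge to steady states. Along the right branch
`x = k₂ y`, where `k₂ (y + θ) - k₂ y → 0`, such limits are independent of `y`: they are layers, and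
a layer is unique because its energy `(U')² / 2 - F U` vanishes. So `u` is asymptotic to a fixed
layer profile along its right branch.

Consequently, two waves with the same potential and speed whose right branches differ
asymptotically by a positive constant are ordered for large `y` near the branch; the maximum
principle extends this order to the regions where the waves are near the stable states `±1`, and
vertical sliding with the strong maximum principle handles the remaining compact range. The
reflection of `u` in `x = λ` has a right branch with constant `2λ - C₁` instead of `C₂`, so it lies
above `u` on `x > λ` for `λ > (C₁ + C₂) / 2`, and can do so only for `λ ≥ (C₁ + C₂) / 2`.
-/

open scoped Topology NNReal ContDiff

section PartialDerivatives

variable {u v : ℝ → ℝ → ℝ}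

/-- The operator `Δ + b ∂ₓ + c ∂ᵧ`. A first-order coefficient is allowed in both variables, so that
the class of operators is invariant under exchanging them. -/
noncomputable def driftLaplacian (b c : ℝ) (u : ℝ → ℝ → ℝ) (x y : ℝ) : ℝ :=
  pdxx u x y + pdyy u x y + b * pdx u x y + c * pdy u x y

theorem contDiff_slice_left {n : WithTop ℕ∞} (hu : ContDiff ℝ n ↿u) (y : ℝ) :
    ContDiff ℝ n fun t => u t y :=
  hu.comp (contDiff_id.prodMk contDiff_const)

theorem contDiff_slice_right {n : WithTop ℕ∞} (hu : ContDiff ℝ n ↿u) (x : ℝ) :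
    ContDiff ℝ n (u x) :=
  hu.comp (contDiff_const.prodMk contDiff_id)

theorem hasDerivAt_pdx (hu : ContDiff ℝ 1 ↿u) (x y : ℝ) :
    HasDerivAt (fun t => u t y) (pdx u x y) x :=
  ((contDiff_slice_left hu y).differentiable one_ne_zero x).hasDerivAt

theorem hasDerivAt_pdy (hu : ContDiff ℝ 1 ↿u) (x y : ℝ) : HasDerivAt (u x) (pdy u x y) y :=
  ((contDiff_slice_right hu x).differentiable one_ne_zero y).hasDerivAt

theorem differentiable_deriv_of_contDiff_two {g : ℝ → ℝ} (hg : ContDiff ℝ 2 g) :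
    Differentiable ℝ (deriv g) :=
  (ContDiff.deriv' (n := 1) hg).differentiable one_ne_zero

theorem hasDerivAt_pdxx (hu : ContDiff ℝ 2 ↿u) (x y : ℝ) :
    HasDerivAt (fun t => pdx u t y) (pdxx u x y) x :=
  (differentiable_deriv_of_contDiff_two (contDiff_slice_left hu y) x).hasDerivAt

theorem hasDerivAt_pdyy (hu : ContDiff ℝ 2 ↿u) (x y : ℝ) :
    HasDerivAt (fun t => pdy u x t) (pdyy u x y) y :=
  (differentiable_deriv_of_contDiff_two (contDiff_slice_right hu x) y).hasDerivAt

theorem contDiff_swap {n : WithTop ℕ∞} (hu : ContDiff ℝ n ↿u) :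
    ContDiff ℝ n ↿(fun x y => u y x) :=
  hu.comp (contDiff_snd.prodMk contDiff_fst)

theorem contDiff_translate {n : WithTop ℕ∞} (hu : ContDiff ℝ n ↿u) (a b : ℝ) :
    ContDiff ℝ n ↿(fun x y => u (x + a) (y + b)) :=
  hu.comp ((contDiff_fst.add contDiff_const).prodMk (contDiff_snd.add contDiff_const))

theorem contDiff_reflect {n : WithTop ℕ∞} (hu : ContDiff ℝ n ↿u) (a : ℝ) :
    ContDiff ℝ n ↿(fun x y => u (a - x) y) :=
  hu.comp ((contDiff_const.sub contDiff_fst).prodMk contDiff_snd)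

theorem contDiff_sub {n : WithTop ℕ∞} (hu : ContDiff ℝ n ↿u) (hv : ContDiff ℝ n ↿v) :
    ContDiff ℝ n ↿(fun x y => u x y - v x y) :=
  ContDiff.sub hu hv

theorem driftLaplacian_sub (hu : ContDiff ℝ 2 ↿u) (hv : ContDiff ℝ 2 ↿v) (b c x y : ℝ) :
    driftLaplacian b c (fun x y => u x y - v x y) x y =
      driftLaplacian b c u x y - driftLaplacian b c v x y := by
  have hu₁ := hu.of_le one_le_two
  have hv₁ := hv.of_le one_le_two
  have hx : pdx (fun x y => u x y - v x y) = fun x y => pdx u x y - pdx v x y := by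
    funext x y
    exact ((hasDerivAt_pdx hu₁ x y).sub (hasDerivAt_pdx hv₁ x y)).deriv
  have hy : pdy (fun x y => u x y - v x y) = fun x y => pdy u x y - pdy v x y := by
    funext x y
    exact ((hasDerivAt_pdy hu₁ x y).sub (hasDerivAt_pdy hv₁ x y)).deriv
  have hxx : pdxx (fun x y => u x y - v x y) x y = pdxx u x y - pdxx v x y := by
    rw [pdxx, hx]
    exact ((hasDerivAt_pdxx hu x y).sub (hasDerivAt_pdxx hv x y)).deriv
  have hyy : pdyy (fun x y => u x y - v x y) x y = pdyy u x y - pdyy v x y := by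
    rw [pdyy, hy]
    exact ((hasDerivAt_pdyy hu x y).sub (hasDerivAt_pdyy hv x y)).deriv
  rw [driftLaplacian, hxx, hyy, hx, hy, driftLaplacian, driftLaplacian]
  ring

theorem driftLaplacian_swap (u : ℝ → ℝ → ℝ) (b c x y : ℝ) :
    driftLaplacian c b (fun x y => u y x) x y = driftLaplacian b c u y x := by
  change pdyy u y x + pdxx u y x + c * pdy u y x + b * pdx u y x = driftLaplacian b c u y x
  rw [driftLaplacian]
  ring

theorem driftLaplacian_neg (u : ℝ → ℝ → ℝ) (b c x y : ℝ) :
    driftLaplacian b c (fun x y => -u x y) x y = -driftLaplacian b c u x y := by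
  simp only [driftLaplacian, pdx, pdy, pdxx, pdyy, deriv.fun_neg]
  ring

theorem driftLaplacian_mul_sub_const (u : ℝ → ℝ → ℝ) (b c κ m x y : ℝ) :
    driftLaplacian b c (fun x y => κ * (u x y - m)) x y = κ * driftLaplacian b c u x y := by
  simp only [driftLaplacian, pdx, pdy, pdxx, pdyy, deriv_const_mul_field', deriv_sub_const]
  ring

theorem driftLaplacian_translate (u : ℝ → ℝ → ℝ) (b c s t x y : ℝ) :
    driftLaplacian b c (fun x y => u (x + s) (y + t)) x y =
      driftLaplacian b c u (x + s) (y + t) := by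
  have hx (x y : ℝ) : deriv (fun r => u (r + s) (y + t)) x = pdx u (x + s) (y + t) :=
    deriv_comp_add_const (fun r => u r (y + t)) s x
  have hy (x y : ℝ) : deriv (fun r => u (x + s) (r + t)) y = pdy u (x + s) (y + t) :=
    deriv_comp_add_const (fun r => u (x + s) r) t y
  have hxx : deriv (fun r => pdx u (r + s) (y + t)) x = pdxx u (x + s) (y + t) :=
    deriv_comp_add_const (fun r => pdx u r (y + t)) s x
  have hyy : deriv (fun r => pdy u (x + s) (r + t)) y = pdyy u (x + s) (y + t) :=
    deriv_comp_add_const (fun r => pdy u (x + s) r) t y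
  rw [driftLaplacian, driftLaplacian, ← hxx, ← hyy]
  simp only [pdxx, pdyy, pdx, pdy, hx, hy]

theorem driftLaplacian_reflect (u : ℝ → ℝ → ℝ) (b c a x y : ℝ) :
    driftLaplacian (-b) c (fun x y => u (a - x) y) x y = driftLaplacian b c u (a - x) y := by
  have hx (x : ℝ) : pdx (fun x y => u (a - x) y) x y = -pdx u (a - x) y :=
    deriv_comp_const_sub (fun r => u r y) a x
  have hxx : pdxx (fun x y => u (a - x) y) x y = pdxx u (a - x) y := by
    simp only [pdxx, hx, deriv.fun_neg, deriv_comp_const_sub (fun r => pdx u r y) a x, neg_neg]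
  rw [driftLaplacian, hxx, hx, neg_mul_neg]
  rfl

end PartialDerivatives

section PenalizedMinimum

theorem second_deriv_nonneg_of_isLocalMin {f f' : ℝ → ℝ} {f'' a : ℝ} (hmin : IsLocalMin f a)
    (hf : ∀ t, HasDerivAt f (f' t) t) (hf' : HasDerivAt f' f'' a) : 0 ≤ f'' := by
  by_contra! hneg
  have hderiv : deriv f = f' := funext fun t => (hf t).deriv
  have hmax : IsLocalMax f a :=
    isLocalMax_of_deriv_deriv_neg (by rwa [hderiv, hf'.deriv]) hmin.deriv_eq_zero
      (hf a).continuousAt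
  have hconst : f =ᶠ[𝓝 a] fun _ => f a := by
    filter_upwards [hmin, hmax] with t h h' using le_antisymm h' h
  have hzero : f' =ᶠ[𝓝 a] fun _ => 0 := by
    filter_upwards [hconst.eventually_nhds] with t ht
    exact (hf t).unique ((hasDerivAt_const t (f a)).congr_of_eventuallyEq ht)
  exact hneg.ne (hf'.unique ((hasDerivAt_const a 0).congr_of_eventuallyEq hzero))

/-- The Japanese bracket `√(1 + t²)`: a coercive function whose first and second derivatives are
bounded by `1`, added with a small weight to force minima to exist on unbounded sets. -/
noncomputable def penalty (t : ℝ) : ℝ := √(1 + t ^ 2)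

theorem abs_le_penalty (t : ℝ) : |t| ≤ penalty t :=
  Real.abs_le_sqrt (by linarith)

theorem one_le_penalty (t : ℝ) : 1 ≤ penalty t := by
  rw [penalty, Real.one_le_sqrt]
  nlinarith

theorem penalty_sq (t : ℝ) : penalty t ^ 2 = 1 + t ^ 2 :=
  Real.sq_sqrt (by positivity)

@[fun_prop]
theorem continuous_penalty : Continuous penalty := by
  unfold penalty
  fun_prop

theorem hasDerivAt_penalty (t : ℝ) : HasDerivAt penalty (t / penalty t) t := by
  have h : HasDerivAt (fun t : ℝ => 1 + t ^ 2) (2 * t) t := by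
    simpa using ((hasDerivAt_id t).pow 2).const_add 1
  have := h.sqrt (by positivity)
  rwa [mul_div_mul_left _ _ two_ne_zero] at this

theorem hasDerivAt_div_penalty (t : ℝ) :
    HasDerivAt (fun t => t / penalty t) (1 / penalty t ^ 3) t := by
  have hp : penalty t ≠ 0 := by linarith [one_le_penalty t]
  refine ((hasDerivAt_id t).div (hasDerivAt_penalty t) hp).congr_deriv ?_
  have hsq := penalty_sq t
  simp only [id]
  field_simp
  linarith

theorem abs_div_penalty_le_one (t : ℝ) : |t / penalty t| ≤ 1 := by
  have hp : 0 < penalty t := by linarith [one_le_penalty t]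
  rw [abs_div, abs_of_pos hp, div_le_one hp]
  exact abs_le_penalty t

theorem one_div_penalty_pow_le_one (t : ℝ) : 1 / penalty t ^ 3 ≤ 1 := by
  have h := one_le_pow₀ (n := 3) (one_le_penalty t)
  exact div_le_one_of_le₀ h (by linarith)

theorem abs_deriv_le_and_neg_le_second_deriv_of_isLocalMin {g g' : ℝ → ℝ} {g'' a ε : ℝ}
    (hε : 0 ≤ ε) (hmin : IsLocalMin (fun t => g t + ε * penalty t) a)
    (hg : ∀ t, HasDerivAt g (g' t) t) (hg' : HasDerivAt g' g'' a) :
    |g' a| ≤ ε ∧ -ε ≤ g'' := by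
  have hd (t : ℝ) : HasDerivAt (fun t => g t + ε * penalty t) (g' t + ε * (t / penalty t)) t :=
    (hg t).add ((hasDerivAt_penalty t).const_mul ε)
  have first : g' a + ε * (a / penalty a) = 0 := hmin.hasDerivAt_eq_zero (hd a)
  have second := second_deriv_nonneg_of_isLocalMin hmin hd
    (hg'.add ((hasDerivAt_div_penalty a).const_mul ε))
  constructor
  · rw [eq_neg_of_add_eq_zero_left first, abs_neg, abs_mul, abs_of_nonneg hε]
    exact mul_le_of_le_one_right hε (abs_div_penalty_le_one a)
  · linarith [mul_le_of_le_one_right hε (one_div_penalty_pow_le_one a)]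

theorem mul_le_mul_abs_of_abs_le {a t ε : ℝ} (ht : |t| ≤ ε) : a * t ≤ ε * |a| :=
  calc a * t ≤ |a| * |t| := (le_abs_self _).trans_eq (abs_mul a t)
    _ ≤ |a| * ε := mul_le_mul_of_nonneg_left ht (abs_nonneg a)
    _ = ε * |a| := mul_comm _ _

theorem neg_mul_le_driftLaplacian_of_isLocalMin {w : ℝ → ℝ → ℝ} (hw : ContDiff ℝ 2 ↿w)
    {b c ε x₀ y₀ : ℝ} (hε : 0 ≤ ε)
    (hmin : ∀ᶠ p : ℝ × ℝ in 𝓝 (x₀, y₀), w x₀ y₀ + ε * (penalty x₀ + penalty y₀) ≤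
      w p.1 p.2 + ε * (penalty p.1 + penalty p.2)) :
    -(ε * (2 + |b| + |c|)) ≤ driftLaplacian b c w x₀ y₀ := by
  have hw₁ := hw.of_le one_le_two
  have hminx : IsLocalMin (fun t => w t y₀ + ε * penalty t) x₀ := by
    filter_upwards [(Continuous.prodMk_left y₀).continuousAt.eventually hmin] with t ht
    linarith
  have hminy : IsLocalMin (fun t => w x₀ t + ε * penalty t) y₀ := by
    filter_upwards [(Continuous.prodMk_right x₀).continuousAt.eventually hmin] with t ht
    linarith
  obtain ⟨hx, hxx⟩ := abs_deriv_le_and_neg_le_second_deriv_of_isLocalMin hε hminx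
    (hasDerivAt_pdx hw₁ · y₀) (hasDerivAt_pdxx hw x₀ y₀)
  obtain ⟨hy, hyy⟩ := abs_deriv_le_and_neg_le_second_deriv_of_isLocalMin hε hminy
    (hasDerivAt_pdy hw₁ x₀) (hasDerivAt_pdyy hw x₀ y₀)
  have hb := mul_le_mul_abs_of_abs_le (a := b) (abs_neg (pdx w x₀ y₀) ▸ hx)
  have hc := mul_le_mul_abs_of_abs_le (a := c) (abs_neg (pdy w x₀ y₀) ▸ hy)
  rw [driftLaplacian]
  linarith

theorem eventually_mul_lt (a : ℝ) {r : ℝ} (hr : 0 < r) : ∀ᶠ ε in 𝓝[>] (0 : ℝ), ε * a < r := by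
  have h : Tendsto (fun ε : ℝ => ε * a) (𝓝[>] 0) (𝓝 (0 * a)) :=
    (Continuous.tendsto (by fun_prop) 0).mono_left nhdsWithin_le_nhds
  exact h.eventually_lt_const (by simpa using hr)

theorem eventually_exists_penalized_min {E : Type*} [NormedAddCommGroup E] [ProperSpace E]
    {D : Set E} (hD : IsClosed D) {f P : E → ℝ} (hf : Continuous f) (hP : Continuous P)
    (hP_norm : ∀ p ∈ D, ‖p‖ ≤ P p) {m : ℝ} (hm : ∀ p ∈ D, m ≤ f p) {p₀ : E} (hp₀ : p₀ ∈ D)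
    {a : ℝ} (ha : f p₀ < a) :
    ∀ᶠ ε in 𝓝[>] (0 : ℝ), ∃ q ∈ D, f q < a ∧ ∀ p ∈ D, f q + ε * P q ≤ f p + ε * P p := by
  filter_upwards [eventually_mul_lt (P p₀) (sub_pos.2 ha), self_mem_nhdsWithin] with ε hεa hε
  have hε : 0 < ε := hε
  have hcoercive : ∀ᶠ p in cocompact E ⊓ 𝓟 D, f p₀ + ε * P p₀ ≤ f p + ε * P p := by
    rw [eventually_inf_principal]
    filter_upwards [tendsto_norm_cocompact_atTop.eventually_ge_atTop
      ((f p₀ + ε * P p₀ - m) / ε)] with p hp hpD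
    rw [div_le_iff₀' hε] at hp
    have := mul_le_mul_of_nonneg_left (hP_norm p hpD) hε.le
    linarith [hm p hpD]
  obtain ⟨q, hqD, hq⟩ :=
    (hf.add (hP.const_mul ε)).continuousOn.exists_isMinOn' hD hp₀ hcoercive
  refine ⟨q, hqD, ?_, hq⟩
  have hPq : 0 ≤ ε * P q := mul_nonneg hε.le ((norm_nonneg q).trans (hP_norm q hqD))
  have hqp₀ : f q + ε * P q ≤ f p₀ + ε * P p₀ := hq hp₀
  linarith

end PenalizedMinimum

theorem norm_le_penalty_add (p : ℝ × ℝ) : ‖p‖ ≤ penalty p.1 + penalty p.2 :=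
  max_le (by linarith [abs_le_penalty p.1, Real.norm_eq_abs p.1, one_le_penalty p.2])
    (by linarith [abs_le_penalty p.2, Real.norm_eq_abs p.2, one_le_penalty p.1])

theorem norm_le_penalty_add_of_abs_le_one {p : ℝ × ℝ × ℝ} (hp : |p.2.2| ≤ 1) :
    ‖p‖ ≤ penalty p.1 + penalty p.2.1 :=
  max_le ((le_max_left _ _).trans (norm_le_penalty_add (p.1, p.2.1)))
    (max_le ((le_max_right _ _).trans (norm_le_penalty_add (p.1, p.2.1)))
      (by linarith [Real.norm_eq_abs p.2.2, one_le_penalty p.1, one_le_penalty p.2.1]))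

section GradientBound

variable {f : ℝ → ℝ → ℝ} {A B K b c : ℝ}

theorem driftLaplacian_symm_difference_le_of_penalized_min (hf : ContDiff ℝ 2 ↿f) {ε x₀ y₀ z₀ : ℝ}
    (hε : 0 ≤ ε) (hz₀ : z₀ ∈ Set.Ioo (0 : ℝ) 1)
    (hmin : ∀ x y, ∀ z ∈ Set.Icc (0 : ℝ) 1,
      K * (z₀ * (2 - z₀)) - (f (x₀ + z₀) y₀ - f (x₀ - z₀) y₀) + ε * (penalty x₀ + penalty y₀) ≤
        K * (z * (2 - z)) - (f (x + z) y - f (x - z) y) + ε * (penalty x + penalty y)) :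
    driftLaplacian b c f (x₀ + z₀) y₀ - driftLaplacian b c f (x₀ - z₀) y₀ ≤
      -2 * K + ε * (1 + |b| + |c|) := by
  have hf₁ := hf.of_le one_le_two
  have hz₀' := Set.Ioo_subset_Icc_self hz₀
  have hminx : IsLocalMin (fun t => f (t - z₀) y₀ - f (t + z₀) y₀ + ε * penalty t) x₀ :=
    Eventually.of_forall fun t => by linarith [hmin t y₀ z₀ hz₀']
  have hminy : IsLocalMin (fun t => f (x₀ - z₀) t - f (x₀ + z₀) t + ε * penalty t) y₀ :=
    Eventually.of_forall fun t => by linarith [hmin x₀ t z₀ hz₀']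
  have hminz : IsLocalMin (fun t => K * (t * (2 - t)) + (f (x₀ - t) y₀ - f (x₀ + t) y₀)) z₀ := by
    filter_upwards [Ioo_mem_nhds hz₀.1 hz₀.2] with t ht
    linarith [hmin x₀ y₀ t (Set.Ioo_subset_Icc_self ht)]
  obtain ⟨hx, -⟩ := abs_deriv_le_and_neg_le_second_deriv_of_isLocalMin hε hminx
    (fun t => ((hasDerivAt_pdx hf₁ _ y₀).comp_sub_const t z₀).sub
      ((hasDerivAt_pdx hf₁ _ y₀).comp_add_const t z₀))
    (((hasDerivAt_pdxx hf _ y₀).comp_sub_const x₀ z₀).sub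
      ((hasDerivAt_pdxx hf _ y₀).comp_add_const x₀ z₀))
  obtain ⟨hy, hyy⟩ := abs_deriv_le_and_neg_le_second_deriv_of_isLocalMin hε hminy
    (fun t => (hasDerivAt_pdy hf₁ _ t).sub (hasDerivAt_pdy hf₁ _ t))
    ((hasDerivAt_pdyy hf _ y₀).sub (hasDerivAt_pdyy hf _ y₀))
  have hquad (t : ℝ) : HasDerivAt (fun t : ℝ => K * (t * (2 - t))) (K * (2 - 2 * t)) t :=
    (((hasDerivAt_id t).mul ((hasDerivAt_id t).const_sub 2)).const_mul K).congr_deriv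
      (by simp only [id]; ring)
  have hquad' : HasDerivAt (fun t : ℝ => K * (2 - 2 * t)) (-2 * K) z₀ :=
    ((((hasDerivAt_id z₀).const_mul 2).const_sub 2).const_mul K).congr_deriv (by ring)
  have hzz := second_deriv_nonneg_of_isLocalMin hminz
    (fun t => (hquad t).add (((hasDerivAt_pdx hf₁ _ y₀).comp_const_sub x₀ t).sub
      ((hasDerivAt_pdx hf₁ _ y₀).comp_const_add x₀ t)))
    (hquad'.add (((hasDerivAt_pdxx hf _ y₀).comp_const_sub x₀ z₀).neg.sub
      ((hasDerivAt_pdxx hf _ y₀).comp_const_add x₀ z₀)))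
  have hb := mul_le_mul_abs_of_abs_le (a := b) (abs_sub_comm (pdx f _ y₀) _ ▸ hx)
  have hc := mul_le_mul_abs_of_abs_le (a := c) (abs_sub_comm (pdy f _ y₀) _ ▸ hy)
  rw [driftLaplacian, driftLaplacian]
  linarith

/-- The difference `f (x + z) y - f (x - z) y`, as a function of `(x, y, z)`, is compared with the
barrier `K z (2 - z)`, which is strictly concave in `z`. -/
theorem symm_difference_le (hf : ContDiff ℝ 2 ↿f) (hfA : ∀ x y, |f x y| ≤ A)
    (hL : ∀ x y, |driftLaplacian b c f x y| ≤ B) (hAK : 2 * A ≤ K) (hBK : B < K) (x y : ℝ) {z : ℝ}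
    (hz : z ∈ Set.Icc (0 : ℝ) 1) : f (x + z) y - f (x - z) y ≤ K * (z * (2 - z)) := by
  by_contra! hcon
  let D : Set (ℝ × ℝ × ℝ) := {p | p.2.2 ∈ Set.Icc (0 : ℝ) 1}
  let Φ : ℝ × ℝ × ℝ → ℝ := fun p =>
    K * (p.2.2 * (2 - p.2.2)) - (f (p.1 + p.2.2) p.2.1 - f (p.1 - p.2.2) p.2.1)
  have hD : IsClosed D := isClosed_Icc.preimage (by fun_prop)
  have hΦ : Continuous Φ := by
    have hplus : Continuous fun p : ℝ × ℝ × ℝ => f (p.1 + p.2.2) p.2.1 :=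
      hf.continuous.comp (f := fun p : ℝ × ℝ × ℝ => (p.1 + p.2.2, p.2.1)) (by fun_prop)
    have hminus : Continuous fun p : ℝ × ℝ × ℝ => f (p.1 - p.2.2) p.2.1 :=
      hf.continuous.comp (f := fun p : ℝ × ℝ × ℝ => (p.1 - p.2.2, p.2.1)) (by fun_prop)
    exact .sub (by fun_prop) (hplus.sub hminus)
  have hdiff (x y z : ℝ) : f (x + z) y - f (x - z) y ≤ 2 * A := by
    linarith [(abs_le.1 (hfA (x + z) y)).2, (abs_le.1 (hfA (x - z) y)).1]
  have hA : 0 ≤ A := (abs_nonneg _).trans (hfA 0 0)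
  have hnorm : ∀ p ∈ D, ‖p‖ ≤ penalty p.1 + penalty p.2.1 := fun p hp =>
    norm_le_penalty_add_of_abs_le_one (abs_le.2 ⟨by linarith [hp.1], hp.2⟩)
  have hlow : ∀ p ∈ D, -(2 * A) ≤ Φ p := fun p hp => by
    have := mul_nonneg (by linarith : 0 ≤ K) (mul_nonneg hp.1 (by linarith [hp.2] : 0 ≤ 2 - p.2.2))
    linarith [hdiff p.1 p.2.1 p.2.2]
  obtain ⟨ε, ⟨⟨⟨x₀, y₀, z₀⟩, hz₀, hneg, hmin⟩, hsmall⟩, hε⟩ :=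
    ((eventually_exists_penalized_min hD hΦ (by fun_prop) hnorm hlow (p₀ := (x, y, z)) hz
      (sub_neg.2 hcon)).and (eventually_mul_lt (1 + |b| + |c|) (r := 2 * (K - B))
        (by linarith))).and self_mem_nhdsWithin |>.exists
  have hz₀0 : z₀ ≠ 0 := by
    rintro rfl
    simp [Φ] at hneg
  have hz₀1 : z₀ ≠ 1 := by
    rintro rfl
    linarith [hdiff x₀ y₀ 1]
  have hle := driftLaplacian_symm_difference_le_of_penalized_min (b := b) (c := c) hf
    (le_of_lt hε) ⟨lt_of_le_of_ne hz₀.1 hz₀0.symm, lt_of_le_of_ne hz₀.2 hz₀1⟩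
    fun x y z hz => hmin (x, y, z) hz
  linarith [(abs_le.1 (hL (x₀ + z₀) y₀)).1, (abs_le.1 (hL (x₀ - z₀) y₀)).2]

theorem pdx_le (hf : ContDiff ℝ 2 ↿f) (hfA : ∀ x y, |f x y| ≤ A)
    (hL : ∀ x y, |driftLaplacian b c f x y| ≤ B) (x y : ℝ) : pdx f x y ≤ 2 * A + B := by
  refine le_of_forall_gt_imp_ge_of_dense fun K hK => ?_
  have hA : 0 ≤ A := (abs_nonneg _).trans (hfA 0 0)
  have hB : 0 ≤ B := (abs_nonneg _).trans (hL 0 0)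
  have hd : HasDerivAt (fun z => K * (z * (2 - z)) - (f (x + z) y - f (x - z) y))
      (2 * K - 2 * pdx f x y) 0 := by
    have hx : HasDerivAt (fun t => f t y) (pdx f x y) x :=
      hasDerivAt_pdx (hf.of_le one_le_two) x y
    have hquad := ((hasDerivAt_id (0 : ℝ)).mul ((hasDerivAt_id (0 : ℝ)).const_sub 2)).const_mul K
    refine (hquad.sub ((HasDerivAt.comp_const_add x 0 (by simpa using hx)).sub
      (HasDerivAt.comp_const_sub x 0 (by simpa using hx)))).congr_deriv ?_
    simp only [id]
    ring
  have : 0 ≤ 2 * K - 2 * pdx f x y := by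
    refine ge_of_tendsto hd.tendsto_slope_zero_right ?_
    filter_upwards [Ioo_mem_nhdsGT (zero_lt_one' ℝ)] with z hz
    have := symm_difference_le hf hfA hL (K := K) (by linarith) (by linarith) x y
      (Set.Ioo_subset_Icc_self hz)
    refine mul_nonneg (inv_nonneg.2 hz.1.le) ?_
    simp only [zero_add, add_zero, sub_zero, sub_self, zero_mul, mul_zero]
    linarith
  linarith

theorem abs_pdx_le (hf : ContDiff ℝ 2 ↿f) (hfA : ∀ x y, |f x y| ≤ A)
    (hL : ∀ x y, |driftLaplacian b c f x y| ≤ B) (x y : ℝ) : |pdx f x y| ≤ 2 * A + B := by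
  refine abs_le'.2 ⟨pdx_le hf hfA hL x y, ?_⟩
  have hneg := pdx_le (f := fun x y => -f x y) (b := b) (c := c) hf.neg
    (fun x y => (abs_neg _).trans_le (hfA x y))
    (fun x y => by simpa only [driftLaplacian_neg, abs_neg] using hL x y) x y
  rwa [show pdx (fun x y => -f x y) x y = -pdx f x y from deriv.fun_neg] at hneg

end GradientBound

section MaximumPrinciple

variable {w : ℝ → ℝ → ℝ}

theorem nonneg_of_driftLaplacian_le_of_halfPlane (hw : ContDiff ℝ 2 ↿w) {lam m A b c : ℝ}
    (hm : 0 < m) (hA : ∀ x y, -A ≤ w x y) (hbd : ∀ y, 0 ≤ w lam y)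
    (hL : ∀ x y, lam < x → w x y < 0 → driftLaplacian b c w x y ≤ m * w x y)
    {x : ℝ} (hx : lam ≤ x) (y : ℝ) : 0 ≤ w x y := by
  by_contra! hneg
  obtain ⟨ε, ⟨⟨⟨x₀, y₀⟩, hx₀, hw₀, hmin⟩, hsmall⟩, hε⟩ :=
    ((eventually_exists_penalized_min (D := {p : ℝ × ℝ | lam ≤ p.1})
      (isClosed_le continuous_const continuous_fst) (f := ↿w) hw.continuous
      (by fun_prop) (fun p _ => norm_le_penalty_add p) (fun p _ => hA p.1 p.2) (p₀ := (x, y)) hx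
      (show w x y < w x y / 2 by linarith)).and
      (eventually_mul_lt (2 + |b| + |c|) (r := m * (-w x y / 2))
        (mul_pos hm (by linarith)))).and self_mem_nhdsWithin |>.exists
  have hw₀ : w x₀ y₀ < w x y / 2 := hw₀
  have hx₀ : lam < x₀ := lt_of_le_of_ne hx₀ fun h => by
    have := hbd y₀
    rw [h] at this
    linarith
  have hge : -(ε * (2 + |b| + |c|)) ≤ driftLaplacian b c w x₀ y₀ := by
    refine neg_mul_le_driftLaplacian_of_isLocalMin hw (le_of_lt hε) ?_
    filter_upwards [continuous_fst.continuousAt.eventually (Ioi_mem_nhds hx₀)] with p hp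
    exact hmin p (le_of_lt hp)
  have := mul_lt_mul_of_pos_left hw₀ hm
  linarith [hL x₀ y₀ hx₀ (by linarith)]

theorem exists_disk_forall_lt (hw : Continuous ↿w) {a : ℝ} (ha : a < w 0 0) :
    ∃ r > 0, ∀ x y, x ^ 2 + y ^ 2 ≤ r ^ 2 → a < w x y := by
  obtain ⟨r, hr, hball⟩ :=
    Metric.eventually_nhds_iff.1 ((hw.tendsto (0, 0)).eventually_const_lt ha)
  refine ⟨r / 2, half_pos hr, fun x y hxy => hball (y := (x, y)) ?_⟩
  rw [Prod.dist_eq, max_lt_iff, Real.dist_0_eq_abs, Real.dist_0_eq_abs]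
  exact ⟨(abs_le_of_sq_le_sq (by nlinarith) (half_pos hr).le).trans_lt (half_lt_self hr),
    (abs_le_of_sq_le_sq (by nlinarith) (half_pos hr).le).trans_lt (half_lt_self hr)⟩

/-- The Gaussian `exp (-α |p|²)`, which for large `α` is a strict subsolution away from the
origin; it is the barrier in Hopf's proof of the strong maximum principle. -/
noncomputable def gaussian (α x y : ℝ) : ℝ := exp (-α * (x ^ 2 + y ^ 2))

theorem contDiff_gaussian (α : ℝ) {n : WithTop ℕ∞} : ContDiff ℝ n ↿(gaussian α) :=
  (contDiff_const.mul ((contDiff_fst.pow 2).add (contDiff_snd.pow 2))).exp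

theorem driftLaplacian_gaussian (α b c x y : ℝ) :
    driftLaplacian b c (gaussian α) x y =
      (4 * α ^ 2 * (x ^ 2 + y ^ 2) - 4 * α - 2 * α * (b * x + c * y)) * gaussian α x y := by
  have hdx (x y : ℝ) :
      HasDerivAt (fun t => gaussian α t y) (-2 * α * x * gaussian α x y) x := by
    have h := ((((hasDerivAt_id x).pow 2).add_const (y ^ 2)).const_mul (-α)).exp
    exact h.congr_deriv (by simp only [gaussian, id]; norm_num; ring)
  have hdy (x y : ℝ) :
      HasDerivAt (fun t => gaussian α x t) (-2 * α * y * gaussian α x y) y := by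
    have h := hdx y x
    simp only [gaussian, add_comm (_ ^ 2) (x ^ 2)] at h
    exact h
  have hx (x y : ℝ) : pdx (gaussian α) x y = -2 * α * x * gaussian α x y := (hdx x y).deriv
  have hy (x y : ℝ) : pdy (gaussian α) x y = -2 * α * y * gaussian α x y := (hdy x y).deriv
  have hxx : pdxx (gaussian α) x y = (4 * α ^ 2 * x ^ 2 - 2 * α) * gaussian α x y := by
    simp only [pdxx, hx]
    exact ((((hasDerivAt_id x).const_mul (-2 * α)).mul (hdx x y)).congr_deriv
      (by simp only [id]; ring)).deriv
  have hyy : pdyy (gaussian α) x y = (4 * α ^ 2 * y ^ 2 - 2 * α) * gaussian α x y := by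
    simp only [pdyy, hy]
    exact ((((hasDerivAt_id y).const_mul (-2 * α)).mul (hdy x y)).congr_deriv
      (by simp only [id]; ring)).deriv
  rw [driftLaplacian, hxx, hyy, hx, hy]
  ring

theorem gaussian_le_one {α : ℝ} (hα : 0 ≤ α) (x y : ℝ) : gaussian α x y ≤ 1 :=
  exp_le_one_iff.2 (by nlinarith [mul_nonneg hα (add_nonneg (sq_nonneg x) (sq_nonneg y))])

theorem mul_gaussian_le_driftLaplacian {α r R K b c x y : ℝ} (hα : 1 ≤ α) (hK : 0 ≤ K) (hR : 0 ≤ R)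
    (hαr : 4 + 2 * (|b| + |c|) * R + K ≤ 4 * α * r ^ 2) (hr : r ^ 2 ≤ x ^ 2 + y ^ 2)
    (hxy : x ^ 2 + y ^ 2 ≤ R ^ 2) :
    K * gaussian α x y ≤ driftLaplacian b c (gaussian α) x y := by
  rw [driftLaplacian_gaussian]
  refine mul_le_mul_of_nonneg_right ?_ (exp_pos _).le
  have hx : b * x ≤ R * |b| :=
    mul_le_mul_abs_of_abs_le (abs_le_of_sq_le_sq (by nlinarith) hR)
  have hy : c * y ≤ R * |c| :=
    mul_le_mul_abs_of_abs_le (abs_le_of_sq_le_sq (by nlinarith) hR)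
  have hαr' : 4 * α * r ^ 2 ≤ 4 * α * (x ^ 2 + y ^ 2) := by gcongr
  calc K ≤ α * K := le_mul_of_one_le_left hK hα
    _ ≤ α * (4 * α * (x ^ 2 + y ^ 2) - 4 - 2 * (b * x + c * y)) := by
      gcongr
      linarith
    _ = 4 * α ^ 2 * (x ^ 2 + y ^ 2) - 4 * α - 2 * α * (b * x + c * y) := by ring

theorem isCompact_disk (R : ℝ) : IsCompact {p : ℝ × ℝ | p.1 ^ 2 + p.2 ^ 2 ≤ R ^ 2} := by
  refine Metric.isCompact_of_isClosed_isBounded (isClosed_le (by fun_prop) continuous_const)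
    ((Metric.isBounded_closedBall (x := (0 : ℝ × ℝ)) (r := |R|)).subset fun p hp => ?_)
  rw [mem_closedBall_zero_iff, Prod.norm_def, Real.norm_eq_abs, Real.norm_eq_abs]
  simp only [Set.mem_ofPred_eq] at hp
  exact max_le (sq_le_sq.1 (by nlinarith)) (sq_le_sq.1 (by nlinarith))

theorem mul_gaussian_sub_le_of_disk (hw : ContDiff ℝ 2 ↿w) {α r R K κ b c : ℝ} (hα : 0 ≤ α)
    (hK : 0 < K) (hκ : 0 ≤ κ) (hnn : ∀ x y, x ^ 2 + y ^ 2 ≤ R ^ 2 → 0 ≤ w x y)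
    (hL : ∀ x y, x ^ 2 + y ^ 2 ≤ R ^ 2 → driftLaplacian b c w x y ≤ K * w x y)
    (hinner : ∀ x y, x ^ 2 + y ^ 2 ≤ r ^ 2 → κ ≤ w x y)
    (hsub : ∀ x y, r ^ 2 ≤ x ^ 2 + y ^ 2 → x ^ 2 + y ^ 2 ≤ R ^ 2 →
      K * gaussian α x y ≤ driftLaplacian b c (gaussian α) x y)
    {x y : ℝ} (hxy : x ^ 2 + y ^ 2 ≤ R ^ 2) :
    κ * (gaussian α x y - exp (-α * R ^ 2)) ≤ w x y := by
  have hbarrier : ContDiff ℝ 2 ↿(fun x y => κ * (gaussian α x y - exp (-α * R ^ 2))) :=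
    contDiff_const.mul ((contDiff_gaussian α).sub contDiff_const)
  have hdiff := contDiff_sub hw hbarrier
  obtain ⟨⟨x₁, y₁⟩, hq, hmin⟩ := (isCompact_disk R).exists_isMinOn ⟨(x, y), hxy⟩
    hdiff.continuous.continuousOn
  rw [isMinOn_iff] at hmin
  suffices hkey : 0 ≤ w x₁ y₁ - κ * (gaussian α x₁ y₁ - exp (-α * R ^ 2)) from
    sub_nonneg.1 (hkey.trans (hmin (x, y) hxy))
  by_contra! hneg
  have hω := exp_pos (-α * R ^ 2)
  have hout : r ^ 2 < x₁ ^ 2 + y₁ ^ 2 := by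
    by_contra! hin
    have := mul_le_mul_of_nonneg_left (by linarith [gaussian_le_one hα x₁ y₁] :
      gaussian α x₁ y₁ - exp (-α * R ^ 2) ≤ 1) hκ
    linarith [hinner x₁ y₁ hin]
  have hin : x₁ ^ 2 + y₁ ^ 2 < R ^ 2 := hq.lt_of_ne fun h => by
    rw [gaussian, h, sub_self, mul_zero, sub_zero] at hneg
    exact hneg.not_ge (hnn x₁ y₁ hq)
  have hmax : 0 ≤ driftLaplacian b c w x₁ y₁ - κ * driftLaplacian b c (gaussian α) x₁ y₁ := by
    rw [← driftLaplacian_mul_sub_const, ← driftLaplacian_sub hw hbarrier]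
    have hnhds : ∀ᶠ p : ℝ × ℝ in 𝓝 (x₁, y₁), p.1 ^ 2 + p.2 ^ 2 < R ^ 2 :=
      (by fun_prop : Continuous fun p : ℝ × ℝ => p.1 ^ 2 + p.2 ^ 2).continuousAt
        |>.eventually_lt_const hin
    have := neg_mul_le_driftLaplacian_of_isLocalMin (b := b) (c := c) hdiff le_rfl
      (hnhds.mono fun p hp => by
        simp only [zero_mul, add_zero]
        exact hmin p hp.le)
    rwa [zero_mul, neg_zero] at this
  have hLw := hL x₁ y₁ hq
  have hLφ := mul_le_mul_of_nonneg_left (hsub x₁ y₁ hout.le hq) hκ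
  have := mul_neg_of_pos_of_neg hK hneg
  have : 0 ≤ K * (κ * exp (-α * R ^ 2)) := by positivity
  linarith

theorem pos_of_disk (hw : ContDiff ℝ 2 ↿w) {K R b c : ℝ} (hK : 0 < K) (hR : 0 ≤ R)
    (hnn : ∀ x y, x ^ 2 + y ^ 2 ≤ R ^ 2 → 0 ≤ w x y)
    (hL : ∀ x y, x ^ 2 + y ^ 2 ≤ R ^ 2 → driftLaplacian b c w x y ≤ K * w x y)
    (hpos : 0 < w 0 0) {x y : ℝ} (hxy : x ^ 2 + y ^ 2 < R ^ 2) : 0 < w x y := by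
  obtain ⟨r, hr, hinner⟩ := exists_disk_forall_lt hw.continuous (half_lt_self hpos)
  obtain ⟨α, hα, hαr⟩ : ∃ α, 1 ≤ α ∧ 4 + 2 * (|b| + |c|) * R + K ≤ 4 * α * r ^ 2 := by
    refine ⟨max 1 ((4 + 2 * (|b| + |c|) * R + K) / (4 * r ^ 2)), le_max_left _ _, ?_⟩
    have := (div_le_iff₀ (by positivity : 0 < 4 * r ^ 2)).1
      (le_max_right 1 ((4 + 2 * (|b| + |c|) * R + K) / (4 * r ^ 2)))
    linarith
  have hα0 : 0 < α := zero_lt_one.trans_le hα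
  have hle := mul_gaussian_sub_le_of_disk hw hα0.le hK (half_pos hpos).le hnn hL
    (fun x y h => (hinner x y h).le)
    (fun x y hout hin => mul_gaussian_le_driftLaplacian hα hK.le hR hαr hout hin) hxy.le
  refine (mul_pos (half_pos hpos) (sub_pos.2 (exp_lt_exp.2 ?_))).trans_le hle
  nlinarith

theorem pos_of_halfPlane (hw : ContDiff ℝ 2 ↿w) {lam K b c : ℝ} (hK : 0 < K)
    (hnn : ∀ x y, lam ≤ x → 0 ≤ w x y)
    (hL : ∀ x y, lam ≤ x → driftLaplacian b c w x y ≤ K * w x y)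
    {x₀ y₀ : ℝ} (hx₀ : lam < x₀) (hpos : 0 < w x₀ y₀) {x : ℝ} (hx : lam < x) (y : ℝ) :
    0 < w x y := by
  have hdisk {a z : ℝ} (ha : lam < a) (hz : 0 < w a z) {x y : ℝ}
      (hxy : (x - a) ^ 2 + (y - z) ^ 2 < (a - lam) ^ 2) : 0 < w x y := by
    have hin (s t : ℝ) (h : s ^ 2 + t ^ 2 ≤ (a - lam) ^ 2) : lam ≤ s + a := by
      linarith [(abs_le.1 (abs_le_of_sq_le_sq (a := s) (b := a - lam) (by nlinarith)
        (by linarith))).1]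
    have := pos_of_disk (contDiff_translate hw a z) hK (sub_pos.2 ha).le
      (fun s t h => hnn _ _ (hin s t h))
      (fun s t h => (driftLaplacian_translate w b c a z s t).trans_le (hL _ _ (hin s t h)))
      (by simpa only [zero_add] using hz) hxy
    simpa only [sub_add_cancel] using this
  set d := x₀ - lam with hd
  have hd0 : 0 < d := sub_pos.2 hx₀
  have hp (n : ℕ) : 0 < d * (3 / 2) ^ n := by positivity
  have hchain (n : ℕ) : 0 < w (lam + d * (3 / 2) ^ n) y₀ := by
    induction n with
    | zero => simpa [hd] using hpos
    | succ n ih =>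
      refine hdisk (by linarith [hp n]) ih ?_
      rw [show d * (3 / 2 : ℝ) ^ (n + 1) = d * (3 / 2) ^ n * (3 / 2) by ring]
      nlinarith [hp n]
  obtain ⟨n, hn⟩ := pow_unbounded_of_one_lt
    (((x - lam) ^ 2 + (y - y₀) ^ 2) / (x - lam) / d) (by norm_num : (1 : ℝ) < 3 / 2)
  refine hdisk (by linarith [hp n]) (hchain n) ?_
  rw [div_lt_iff₀ hd0, div_lt_iff₀ (sub_pos.2 hx)] at hn
  nlinarith [mul_pos (hp n) (sub_pos.2 hx)]

end MaximumPrinciple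

section Regularity

/-- A `C²` function on the line which is Lipschitz together with its first two derivatives, with
the common constant `K`. -/
structure C21With (K : ℝ≥0) (g : ℝ → ℝ) : Prop where
  differentiable : Differentiable ℝ g
  differentiable_deriv : Differentiable ℝ (deriv g)
  lipschitz : LipschitzWith K g
  lipschitz_deriv : LipschitzWith K (deriv g)
  lipschitz_deriv_deriv : LipschitzWith K (deriv (deriv g))

theorem C21With.mono {K K' : ℝ≥0} {g : ℝ → ℝ} (hg : C21With K g) (hK : K ≤ K') :
    C21With K' g where
  differentiable := hg.differentiable
  differentiable_deriv := hg.differentiable_deriv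
  lipschitz := hg.lipschitz.weaken hK
  lipschitz_deriv := hg.lipschitz_deriv.weaken hK
  lipschitz_deriv_deriv := hg.lipschitz_deriv_deriv.weaken hK

theorem lipschitzWith_iff_abs_increment_le {K : ℝ≥0} {g : ℝ → ℝ} :
    LipschitzWith K g ↔ ∀ x h, |g (x + h) - g x| ≤ K * |h| := by
  simp only [lipschitzWith_iff_dist_le_mul, Real.dist_eq]
  refine ⟨fun hg x h => by simpa only [add_sub_cancel_left] using hg (x + h) x, fun hg x y => ?_⟩
  simpa only [add_sub_cancel] using hg y (x - y)

theorem abs_taylor_le {g : ℝ → ℝ} {K : ℝ≥0} (hg : Differentiable ℝ g)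
    (hK : LipschitzWith K (deriv g)) (x h : ℝ) :
    |g (x + h) - g x - h * deriv g x| ≤ K * h ^ 2 := by
  have hd (t : ℝ) : HasDerivAt (fun t => g t - t * deriv g x) (deriv g t - deriv g x) t :=
    (hg t).hasDerivAt.sub (((hasDerivAt_id t).mul_const (deriv g x)).congr_deriv (one_mul _))
  have key := (convex_uIcc x (x + h)).norm_image_sub_le_of_norm_hasDerivWithin_le (C := K * |h|)
    (fun t _ => (hd t).hasDerivWithinAt)
    (fun t ht => (hK.dist_le_mul t x).trans (mul_le_mul_of_nonneg_left
      ((Set.abs_sub_left_of_mem_uIcc ht).trans_eq (by rw [add_sub_cancel_left])) K.2))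
    Set.left_mem_uIcc Set.right_mem_uIcc
  calc |g (x + h) - g x - h * deriv g x|
      = |g (x + h) - (x + h) * deriv g x - (g x - x * deriv g x)| := by congr 1; ring
    _ ≤ K * |h| * |x + h - x| := key
    _ = K * h ^ 2 := by rw [add_sub_cancel_left, mul_assoc, abs_mul_abs_self, sq]

variable {u : ℝ → ℝ → ℝ} {b c A : ℝ} {f g : ℝ → ℝ} {B M N K₁ K₂ : ℝ≥0}

theorem contDiff_increment {n : WithTop ℕ∞} (hu : ContDiff ℝ n ↿u) (h : ℝ) :
    ContDiff ℝ n ↿(fun x y => u (x + h) y - u x y) := by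
  simpa only [add_zero] using contDiff_sub (contDiff_translate hu h 0) hu

theorem pdx_increment (hu : ContDiff ℝ 1 ↿u) (h x y : ℝ) :
    pdx (fun x y => u (x + h) y - u x y) x y = pdx u (x + h) y - pdx u x y :=
  (((hasDerivAt_pdx hu (x + h) y).comp_add_const x h).sub (hasDerivAt_pdx hu x y)).deriv

theorem driftLaplacian_increment (hu : ContDiff ℝ 2 ↿u) (b c h x y : ℝ) :
    driftLaplacian b c (fun x y => u (x + h) y - u x y) x y =
      driftLaplacian b c u (x + h) y - driftLaplacian b c u x y := by
  have := driftLaplacian_sub (contDiff_translate hu h 0) hu b c x y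
  rw [driftLaplacian_translate] at this
  simpa only [add_zero] using this

theorem lipschitzWith_pdx (hu : ContDiff ℝ 2 ↿u) (hM : ∀ y, LipschitzWith M fun x => u x y)
    (hN : ∀ y, LipschitzWith N fun x => driftLaplacian b c u x y) (y : ℝ) :
    LipschitzWith (2 * M + N) fun x => pdx u x y := by
  simp only [lipschitzWith_iff_abs_increment_le] at hM hN ⊢
  intro x h
  have := abs_pdx_le (contDiff_increment hu h) (fun x y => hM y x h)
    (fun x y => (driftLaplacian_increment hu b c h x y).symm ▸ hN y x h) x y
  rw [pdx_increment (hu.of_le one_le_two)] at this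
  push_cast
  linarith

theorem lipschitzWith_pdxx (hu : ContDiff ℝ 2 ↿u)
    (hM : ∀ y, LipschitzWith M fun x => pdx u x y)
    (hN : ∀ h y, LipschitzWith (N * ‖h‖₊)
      fun x => driftLaplacian b c u (x + h) y - driftLaplacian b c u x y) (y : ℝ) :
    LipschitzWith (2 * M + N) fun x => pdxx u x y := by
  refine lipschitzWith_iff_abs_increment_le.2 fun x h => ?_
  have hu₁ := hu.of_le one_le_two
  have hlip (y : ℝ) : LipschitzWith (M * ‖h‖₊) fun x => u (x + h) y - u x y :=
    lipschitzWith_of_nnnorm_deriv_le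
      ((contDiff_slice_left (contDiff_increment hu h) y).differentiable two_ne_zero) fun x => by
      refine (congrArg _ (pdx_increment hu₁ h x y)).trans_le ?_
      exact lipschitzWith_iff_abs_increment_le.1 (hM y) x h
  have hpdx := lipschitzWith_pdx (b := b) (c := c) (contDiff_increment hu h) hlip
    (fun y => by simpa only [driftLaplacian_increment hu] using hN h y) y
  simp only [pdx_increment hu₁] at hpdx
  have hd : HasDerivAt (fun x => pdx u (x + h) y - pdx u x y) (pdxx u (x + h) y - pdxx u x y) x :=
    ((hasDerivAt_pdxx hu (x + h) y).comp_add_const x h).sub (hasDerivAt_pdxx hu x y)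
  calc |pdxx u (x + h) y - pdxx u x y|
      = ‖deriv (fun x => pdx u (x + h) y - pdx u x y) x‖ := by rw [hd.deriv, Real.norm_eq_abs]
    _ ≤ (2 * (M * ‖h‖₊) + N * ‖h‖₊ : ℝ≥0) := norm_deriv_le_of_lipschitz hpdx
    _ = (2 * M + N : ℝ≥0) * |h| := by
      push_cast
      rw [Real.norm_eq_abs]
      ring

theorem lipschitzWith_comp_increment (hf : Differentiable ℝ f)
    (hB : ∀ s ∈ Set.Icc (-A) A, |deriv f s| ≤ B)
    (hfB : LipschitzOnWith B (deriv f) (Set.Icc (-A) A))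
    (hg : Differentiable ℝ g) (hgA : ∀ t, g t ∈ Set.Icc (-A) A) (hK₁ : LipschitzWith K₁ g)
    (hK₂ : LipschitzWith K₂ (deriv g)) (h : ℝ) :
    LipschitzWith ((B * K₁ * K₁ + B * K₂) * ‖h‖₊) fun t => f (g (t + h)) - f (g t) := by
  have hd (t : ℝ) : HasDerivAt (fun t => f (g (t + h)) - f (g t))
      (deriv f (g (t + h)) * deriv g (t + h) - deriv f (g t) * deriv g t) t :=
    (((hf _).hasDerivAt.comp _ (hg _).hasDerivAt).comp_add_const t h).sub
      ((hf _).hasDerivAt.comp _ (hg _).hasDerivAt)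
  refine lipschitzWith_of_nnnorm_deriv_le (fun t => (hd t).differentiableAt) fun t => ?_
  rw [(hd t).deriv, ← NNReal.coe_le_coe, coe_nnnorm, Real.norm_eq_abs]
  push_cast
  rw [Real.norm_eq_abs]
  have hg₁ : |deriv g (t + h)| ≤ K₁ := norm_deriv_le_of_lipschitz hK₁
  have hg₂ := lipschitzWith_iff_abs_increment_le.1 hK₂ t h
  have hf₁ := hB (g t) (hgA t)
  have hf₂ : |deriv f (g (t + h)) - deriv f (g t)| ≤ B * (K₁ * |h|) :=
    (hfB.dist_le_mul _ (hgA _) _ (hgA _)).trans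
      (mul_le_mul_of_nonneg_left (lipschitzWith_iff_abs_increment_le.1 hK₁ t h) B.2)
  calc |deriv f (g (t + h)) * deriv g (t + h) - deriv f (g t) * deriv g t|
      = |(deriv f (g (t + h)) - deriv f (g t)) * deriv g (t + h) +
          deriv f (g t) * (deriv g (t + h) - deriv g t)| := by congr 1; ring
    _ ≤ |deriv f (g (t + h)) - deriv f (g t)| * |deriv g (t + h)| +
          |deriv f (g t)| * |deriv g (t + h) - deriv g t| := by
      rw [← abs_mul, ← abs_mul]
      exact abs_add_le _ _
    _ ≤ B * (K₁ * |h|) * K₁ + B * (K₂ * |h|) := by gcongr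
    _ = (B * K₁ * K₁ + B * K₂) * |h| := by ring

theorem exists_lipschitzOnWith_Icc (hf : ContDiff ℝ 2 f) (A : ℝ) :
    ∃ B : ℝ≥0, LipschitzOnWith B f (Set.Icc (-A) A) ∧
      LipschitzOnWith B (deriv f) (Set.Icc (-A) A) ∧
      ∀ s ∈ Set.Icc (-A) A, |f s| ≤ B ∧ |deriv f s| ≤ B := by
  have hf' : ContDiff ℝ 1 (deriv f) := ContDiff.deriv' hf
  have hI := isCompact_Icc (a := -A) (b := A)
  obtain ⟨B₁, h₁⟩ := hf.contDiffOn.exists_lipschitzOnWith two_ne_zero (convex_Icc _ _) hI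
  obtain ⟨B₂, h₂⟩ := hf'.contDiffOn.exists_lipschitzOnWith one_ne_zero (convex_Icc _ _) hI
  obtain ⟨B₃, h₃⟩ := hI.exists_bound_of_continuousOn hf.continuous.continuousOn
  obtain ⟨B₄, h₄⟩ := hI.exists_bound_of_continuousOn hf'.continuous.continuousOn
  refine ⟨B₁ ⊔ B₂ ⊔ B₃.toNNReal ⊔ B₄.toNNReal,
    h₁.weaken (le_sup_left.trans (le_sup_left.trans le_sup_left)),
    h₂.weaken (le_sup_right.trans (le_sup_left.trans le_sup_left)),
    fun s hs => ⟨(h₃ s hs).trans ?_, (h₄ s hs).trans ?_⟩⟩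
  · exact (le_coe_toNNReal B₃).trans (NNReal.coe_le_coe.2 (le_sup_right.trans le_sup_left))
  · exact (le_coe_toNNReal B₄).trans (NNReal.coe_le_coe.2 le_sup_right)

theorem exists_c21With (hf : ContDiff ℝ 2 f) (hu : ContDiff ℝ 2 ↿u)
    (huA : ∀ x y, |u x y| ≤ A) (heq : ∀ x y, driftLaplacian b c u x y = f (u x y)) :
    ∃ K : ℝ≥0, ∀ y, C21With K fun x => u x y := by
  obtain ⟨B, hfB, hfB', hB⟩ := exists_lipschitzOnWith_Icc hf A
  have huA' (x y : ℝ) : u x y ∈ Set.Icc (-A) A := abs_le.1 (huA x y)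
  have hA : 0 ≤ A := (abs_nonneg _).trans (huA 0 0)
  lift A to ℝ≥0 using hA
  have hdiff (y : ℝ) := (contDiff_slice_left hu y).differentiable two_ne_zero
  obtain ⟨K₁, hK₁⟩ : ∃ K₁, ∀ y, LipschitzWith K₁ fun x => u x y :=
    ⟨2 * A + B, fun y => lipschitzWith_of_nnnorm_deriv_le (hdiff y) fun x =>
      NNReal.coe_le_coe.1
        (abs_pdx_le hu huA (fun x y => (heq x y).symm ▸ (hB _ (huA' x y)).1) x y)⟩
  obtain ⟨K₂, hK₂⟩ : ∃ K₂, ∀ y, LipschitzWith K₂ fun x => pdx u x y :=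
    ⟨_, lipschitzWith_pdx (b := b) (c := c) (N := B * K₁) hu hK₁ fun y => by
      simp only [heq]
      exact lipschitzOnWith_univ.1
        (hfB.comp (lipschitzOnWith_univ.2 (hK₁ y)) fun x _ => huA' x y)⟩
  obtain ⟨K₃, hK₃⟩ : ∃ K₃, ∀ y, LipschitzWith K₃ fun x => pdxx u x y :=
    ⟨_, lipschitzWith_pdxx (b := b) (c := c) hu hK₂ fun h y => by
      simp only [heq]
      exact lipschitzWith_comp_increment (hf.differentiable two_ne_zero)
        (fun s hs => (hB s hs).2) hfB' (hdiff y) (fun x => huA' x y) (hK₁ y) (hK₂ y) h⟩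
  exact ⟨K₁ ⊔ K₂ ⊔ K₃, fun y => ⟨hdiff y,
    differentiable_deriv_of_contDiff_two (contDiff_slice_left hu y),
    (hK₁ y).weaken (le_sup_left.trans le_sup_left),
    (hK₂ y).weaken (le_sup_right.trans le_sup_left), (hK₃ y).weaken le_sup_right⟩⟩

end Regularity

section Limits

variable {ι : Type*} {K : ℝ≥0}

theorem exists_tendsto_of_abs_le (𝒰 : Ultrafilter ι) {g : ι → ℝ} {C : ℝ} (hg : ∀ i, |g i| ≤ C) :
    ∃ l, Tendsto g 𝒰 (𝓝 l) := by
  obtain ⟨l, -, hl⟩ := (isCompact_Icc (a := -C) (b := C)).ultrafilter_le_nhds (𝒰.map g)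
    (tendsto_principal.2 (Eventually.of_forall fun i => abs_le.1 (hg i)))
  exact ⟨l, hl⟩

theorem hasDerivAt_of_tendsto {l : Filter ι} [l.NeBot] {g : ι → ℝ → ℝ} {V : ℝ → ℝ} {P s : ℝ}
    (hg : ∀ i, Differentiable ℝ (g i)) (hK : ∀ i, LipschitzWith K (deriv (g i)))
    (hV : ∀ t, Tendsto (fun i => g i t) l (𝓝 (V t)))
    (hP : Tendsto (fun i => deriv (g i) s) l (𝓝 P)) : HasDerivAt V P s := by
  have htaylor (h : ℝ) : |V (s + h) - V s - h * P| ≤ K * h ^ 2 :=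
    le_of_tendsto (((hV (s + h)).sub (hV s)).sub (hP.const_mul h)).abs
      (Eventually.of_forall fun i => abs_taylor_le (hg i) (hK i) s h)
  rw [hasDerivAt_iff_isLittleO_nhds_zero]
  have hO : (fun h : ℝ => V (s + h) - V s - h • P) =O[𝓝 0] fun h : ℝ => h ^ 2 :=
    Asymptotics.IsBigO.of_bound K (Eventually.of_forall fun h => by simpa using htaylor h)
  exact hO.trans_isLittleO
    (by simpa using Asymptotics.isLittleO_pow_pow (𝕜 := ℝ) (m := 1) (n := 2) one_lt_two)

theorem tendsto_deriv_of_tendsto (𝒰 : Ultrafilter ι) {K' : ℝ≥0} {g : ι → ℝ → ℝ} {V : ℝ → ℝ}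
    (hg : ∀ i, Differentiable ℝ (g i)) (hK : ∀ i, LipschitzWith K (g i))
    (hK' : ∀ i, LipschitzWith K' (deriv (g i)))
    (hV : ∀ t, Tendsto (fun i => g i t) 𝒰 (𝓝 (V t))) :
    Differentiable ℝ V ∧ ∀ s, Tendsto (fun i => deriv (g i) s) 𝒰 (𝓝 (deriv V s)) := by
  have hlim (s : ℝ) : ∃ P, HasDerivAt V P s ∧ Tendsto (fun i => deriv (g i) s) 𝒰 (𝓝 P) := by
    obtain ⟨P, hP⟩ := exists_tendsto_of_abs_le 𝒰 (g := fun i => deriv (g i) s)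
      fun i => norm_deriv_le_of_lipschitz (hK i)
    exact ⟨P, hasDerivAt_of_tendsto hg hK' hV hP, hP⟩
  refine ⟨fun s => ?_, fun s => ?_⟩ <;> obtain ⟨P, hd, hP⟩ := hlim s
  exacts [hd.differentiableAt, hd.deriv ▸ hP]

theorem deriv_deriv_comp_const_add (g : ℝ → ℝ) (a x : ℝ) :
    deriv (deriv fun t => g (a + t)) x = deriv (deriv g) (a + x) := by
  rw [funext (deriv_comp_const_add g a)]
  exact deriv_comp_const_add (deriv g) a x

theorem C21With.comp_const_add {g : ℝ → ℝ} (hg : C21With K g) (a : ℝ) :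
    C21With K fun t => g (a + t) := by
  have hderiv (g : ℝ → ℝ) : deriv (fun t => g (a + t)) = fun t => deriv g (a + t) :=
    funext fun t => deriv_comp_const_add g a t
  have hlip {g : ℝ → ℝ} (hg : LipschitzWith K g) : LipschitzWith K fun t => g (a + t) := by
    simpa only [mul_one, Function.comp_def] using hg.comp (isometry_add_left a).lipschitz
  constructor
  · exact hg.differentiable.comp (differentiable_id.const_add a)
  · rw [hderiv]
    exact hg.differentiable_deriv.comp (differentiable_id.const_add a)
  · exact hlip hg.lipschitz
  · rw [hderiv]
    exact hlip hg.lipschitz_deriv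
  · rw [hderiv, hderiv]
    exact hlip hg.lipschitz_deriv_deriv

theorem C21With.comp_const_sub {g : ℝ → ℝ} (hg : C21With K g) (a : ℝ) :
    C21With K fun t => g (a - t) := by
  have hderiv (g : ℝ → ℝ) : deriv (fun t => g (a - t)) = fun t => -deriv g (a - t) :=
    funext fun t => deriv_comp_const_sub g a t
  have hlip {g : ℝ → ℝ} (hg : LipschitzWith K g) : LipschitzWith K fun t => g (a - t) :=
    mul_one K ▸ hg.comp (IsometryEquiv.subLeft a).isometry.lipschitz
  have hderiv₂ : deriv (deriv fun t => g (a - t)) = fun t => deriv (deriv g) (a - t) := by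
    rw [hderiv, deriv.fun_neg', hderiv]
    simp only [neg_neg]
  constructor
  · exact hg.differentiable.comp (differentiable_id.const_sub a)
  · rw [hderiv]
    exact (hg.differentiable_deriv.comp (differentiable_id.const_sub a)).neg
  · exact hlip hg.lipschitz
  · rw [hderiv]
    exact (hlip hg.lipschitz_deriv).neg
  · rw [hderiv₂]
    exact hlip hg.lipschitz_deriv_deriv

theorem C21With.tendsto_derivs (𝒰 : Ultrafilter ι) {g : ι → ℝ → ℝ} {V : ℝ → ℝ}
    (hg : ∀ i, C21With K (g i)) (hV : ∀ t, Tendsto (fun i => g i t) 𝒰 (𝓝 (V t))) :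
    (Differentiable ℝ V ∧ Differentiable ℝ (deriv V)) ∧
      ∀ s, Tendsto (fun i => deriv (g i) s) 𝒰 (𝓝 (deriv V s)) ∧
        Tendsto (fun i => deriv (deriv (g i)) s) 𝒰 (𝓝 (deriv (deriv V) s)) := by
  obtain ⟨hd, ht⟩ := tendsto_deriv_of_tendsto 𝒰 (fun i => (hg i).differentiable)
    (fun i => (hg i).lipschitz) (fun i => (hg i).lipschitz_deriv) hV
  obtain ⟨hd', ht'⟩ := tendsto_deriv_of_tendsto 𝒰 (fun i => (hg i).differentiable_deriv)
    (fun i => (hg i).lipschitz_deriv) (fun i => (hg i).lipschitz_deriv_deriv) ht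
  exact ⟨⟨hd, hd'⟩, fun s => ⟨ht s, ht' s⟩⟩

theorem continuousAt_of_lipschitzWith_of_dense {α β γ : Type*} [PseudoMetricSpace α]
    [TopologicalSpace β] [PseudoMetricSpace γ] {a : α → β → γ} {D : Set α} {θ : β}
    (hK : ∀ θ, LipschitzWith K fun s => a s θ) (hD : Dense D)
    (ha : ∀ q ∈ D, ContinuousAt (a q) θ) (s : α) : ContinuousAt (a s) θ := by
  refine continuousAt_of_locally_uniform_approx_of_continuousAt fun U hU => ?_
  obtain ⟨ε, hε, hεU⟩ := Metric.mem_uniformity_dist.1 hU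
  obtain ⟨q, hq, hsq⟩ := hD.exists_dist_lt s (div_pos hε (by positivity : (0 : ℝ) < K + 1))
  refine ⟨Set.univ, univ_mem, a q, ha q hq, fun θ' _ => hεU ?_⟩
  rw [lt_div_iff₀ (by positivity)] at hsq
  have := (hK θ').dist_le_mul s q
  linarith [dist_nonneg (x := s) (y := q)]

theorem dense_forall_continuousAt {a : ℝ → ℝ → ℝ} (hmono : ∀ s, Monotone (a s))
    (hK : ∀ θ, LipschitzWith K fun s => a s θ) : Dense {θ | ∀ s, ContinuousAt (a s) θ} := by
  have hcount : (⋃ q : ℚ, {θ | ¬ContinuousAt (a q) θ}).Countable :=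
    Set.countable_iUnion fun q => (hmono q).countable_not_continuousAt
  refine (hcount.dense_compl ℝ).mono fun θ hθ =>
    continuousAt_of_lipschitzWith_of_dense hK (Rat.denseRange_cast (𝕜 := ℝ)) ?_
  rintro _ ⟨q, rfl⟩
  by_contra hq
  exact hθ (Set.mem_iUnion.2 ⟨q, hq⟩)

theorem eventually_exp_mul_le {l : Filter ι} {Y : ι → ℝ} (hY : Tendsto Y l atTop) {θ θ' : ℝ}
    (hθ : θ < θ') (τ : ℝ) : ∀ᶠ i in l, exp θ * Y i + τ ≤ exp θ' * Y i := by
  filter_upwards [(hY.const_mul_atTop (sub_pos.2 (exp_lt_exp.2 hθ))).eventually_ge_atTop τ]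
    with i hi
  linarith

theorem tendsto_exp_mul_add_of_continuousAt {l : Filter ι} {v : ι → ℝ → ℝ} {Y : ι → ℝ}
    {a : ℝ → ℝ} {θ : ℝ} (hv : ∀ i, Monotone (v i)) (hY : Tendsto Y l atTop)
    (ha : ∀ θ, Tendsto (fun i => v i (exp θ * Y i)) l (𝓝 (a θ))) (hθ : ContinuousAt a θ) (τ : ℝ) :
    Tendsto (fun i => v i (exp θ * Y i + τ)) l (𝓝 (a θ)) := by
  refine tendsto_order.2 ⟨fun b hb => ?_, fun b hb => ?_⟩
  · obtain ⟨θ', hb', hθ'⟩ := (((hθ.eventually_const_lt hb).filter_mono nhdsWithin_le_nhds).and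
      (self_mem_nhdsWithin (s := Set.Iio θ))).exists
    filter_upwards [(ha θ').eventually_const_lt hb', eventually_exp_mul_le hY hθ' (-τ)]
      with i hi hle
    exact hi.trans_le (hv i (by linarith))
  · obtain ⟨θ', hb', hθ'⟩ := (((hθ.eventually_lt_const hb).filter_mono nhdsWithin_le_nhds).and
      (self_mem_nhdsWithin (s := Set.Ioi θ))).exists
    filter_upwards [(ha θ').eventually_lt_const hb', eventually_exp_mul_le hY hθ' τ] with i hi hle
    exact (hv i hle).trans_lt hi

end Limits

/-- `V` solves the one-dimensional equation `V'' = f V` on the whole line. -/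
structure IsSteadyState (f V : ℝ → ℝ) : Prop where
  differentiable : Differentiable ℝ V
  hasDerivAt_deriv : ∀ s, HasDerivAt (deriv V) (f (V s)) s

/-- A solution of `Δu + c uᵧ = f u` in the plane with `|u| ≤ 1`, increasing in `y` from `-1` to `1`,
for which the interior estimates hold with the constant `K`. -/
structure RegularWave (f : ℝ → ℝ) (c : ℝ) (K : ℝ≥0) (u : ℝ → ℝ → ℝ) : Prop where
  contDiff : ContDiff ℝ 2 ↿u
  pde : ∀ x y, driftLaplacian 0 c u x y = f (u x y)
  abs_le_one : ∀ x y, |u x y| ≤ 1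
  strictMono : ∀ x, StrictMono (u x)
  horizontal : ∀ y, C21With K fun x => u x y
  vertical : ∀ x, C21With K (u x)
  tendsto_atTop : ∀ x, Tendsto (u x) atTop (𝓝 1)
  tendsto_atBot : ∀ x, Tendsto (u x) atBot (𝓝 (-1))

namespace RegularWave

variable {f : ℝ → ℝ} {c : ℝ} {K : ℝ≥0} {u : ℝ → ℝ → ℝ} {ι : Type*}

theorem reflect (hu : RegularWave f c K u) (a : ℝ) :
    RegularWave f c K fun x y => u (a - x) y where
  contDiff := contDiff_reflect hu.contDiff a
  pde x y := by
    rw [← neg_zero, driftLaplacian_reflect]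
    exact hu.pde (a - x) y
  abs_le_one x y := hu.abs_le_one (a - x) y
  strictMono x := hu.strictMono (a - x)
  horizontal y := (hu.horizontal y).comp_const_sub a
  vertical x := hu.vertical (a - x)
  tendsto_atTop x := hu.tendsto_atTop (a - x)
  tendsto_atBot x := hu.tendsto_atBot (a - x)

theorem tendsto_of_tendsto_sub (hu : RegularWave f c K u) {l : Filter ι} {X X' Y : ι → ℝ} {v : ℝ}
    (h : Tendsto (fun i => u (X i) (Y i)) l (𝓝 v)) (hX : Tendsto (fun i => X' i - X i) l (𝓝 0)) :
    Tendsto (fun i => u (X' i) (Y i)) l (𝓝 v) := by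
  have h0 : Tendsto (fun i => u (X' i) (Y i) - u (X i) (Y i)) l (𝓝 0) := by
    refine squeeze_zero_norm (a := fun i => K * ‖X' i - X i‖)
      (fun i => (hu.horizontal (Y i)).lipschitz.dist_le_mul _ _) ?_
    simpa using hX.norm.const_mul (K : ℝ)
  simpa using h0.add h

theorem isSteadyState_of_tendsto (hu : RegularWave f c K u) (hf : Continuous f)
    (𝒰 : Ultrafilter ι) {X Y : ι → ℝ} {V : ℝ → ℝ}
    (hV : ∀ s τ, Tendsto (fun i => u (X i + s) (Y i + τ)) 𝒰 (𝓝 (V s))) : IsSteadyState f V := by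
  obtain ⟨⟨hd, hd'⟩, hx⟩ := C21With.tendsto_derivs 𝒰
    (fun i => (hu.horizontal (Y i + 0)).comp_const_add (X i)) (fun s => hV s 0)
  refine ⟨hd, fun s => ?_⟩
  obtain ⟨-, hy⟩ := C21With.tendsto_derivs 𝒰
    (fun i => (hu.vertical (X i + s)).comp_const_add (Y i)) (fun τ => hV s τ)
  have hxx : Tendsto (fun i => pdxx u (X i + s) (Y i + 0)) 𝒰 (𝓝 (deriv (deriv V) s)) :=
    (hx s).2.congr fun i => deriv_deriv_comp_const_add (fun t => u t (Y i + 0)) (X i) s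
  have huy : Tendsto (fun i => pdy u (X i + s) (Y i + 0)) 𝒰 (𝓝 0) := by
    have := (hy 0).1.congr fun i => deriv_comp_const_add (u (X i + s)) (Y i) 0
    rwa [deriv_const] at this
  have huyy : Tendsto (fun i => pdyy u (X i + s) (Y i + 0)) 𝒰 (𝓝 0) := by
    have := (hy 0).2.congr fun i => deriv_deriv_comp_const_add (u (X i + s)) (Y i) 0
    rwa [deriv_const', deriv_const] at this
  have hpde := (hxx.add huyy).add (huy.const_mul c)
  have heq : deriv (deriv V) s = f (V s) := by
    rw [add_zero, mul_zero, add_zero] at hpde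
    refine tendsto_nhds_unique hpde (((hf.tendsto _).comp (hV s 0)).congr fun i => ?_)
    simp only [Function.comp, ← hu.pde, driftLaplacian, zero_mul, add_zero]
  exact heq ▸ (hd' s).hasDerivAt

/-- At a height `θ` where all the monotone functions `θ ↦ a s θ` are continuous, the limit does not
see bounded vertical shifts, so the vertical derivatives disappear from the equation. -/
theorem exists_dense_isSteadyState (hu : RegularWave f c K u) (hf : Continuous f)
    (𝒰 : Ultrafilter ι) (X : ι → ℝ) {Y : ι → ℝ} (hY : Tendsto Y 𝒰 atTop) :
    ∃ a : ℝ → ℝ → ℝ,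
      (∀ s θ, Tendsto (fun i => u (X i + s) (exp θ * Y i)) 𝒰 (𝓝 (a s θ))) ∧
      Dense {θ | IsSteadyState f fun s => a s θ} := by
  choose a ha using fun s θ => exists_tendsto_of_abs_le 𝒰
    (g := fun i => u (X i + s) (exp θ * Y i)) fun i => hu.abs_le_one _ _
  have hmono (s : ℝ) : Monotone (a s) := fun θ θ' hθ =>
    le_of_tendsto_of_tendsto (ha s θ) (ha s θ') <| by
      filter_upwards [hY.eventually_gt_atTop 0] with i hi
      exact (hu.strictMono _).monotone (mul_le_mul_of_nonneg_right (exp_le_exp.2 hθ) hi.le)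
  have hlip (θ : ℝ) : LipschitzWith K fun s => a s θ :=
    LipschitzWith.of_dist_le_mul fun s s' =>
      le_of_tendsto ((ha s θ).dist (ha s' θ)) (Eventually.of_forall fun i =>
        ((hu.horizontal _).comp_const_add (X i)).lipschitz.dist_le_mul s s')
  refine ⟨a, ha, (dense_forall_continuousAt hmono hlip).mono ?_⟩
  intro θ hθ
  exact hu.isSteadyState_of_tendsto hf 𝒰 fun s τ => tendsto_exp_mul_add_of_continuousAt
    (fun i => (hu.strictMono (X i + s)).monotone) hY (ha s) (hθ s) τ

end RegularWave

section OneDimensional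

theorem tendsto_atTop_of_le_deriv {h : ℝ → ℝ} (hd : Differentiable ℝ h) {s₀ ε : ℝ} (hε : 0 < ε)
    (hle : ∀ s, s₀ ≤ s → ε ≤ deriv h s) : Tendsto h atTop atTop := by
  have hlin : Tendsto (fun s => h s₀ + ε * (s - s₀)) atTop atTop :=
    tendsto_atTop_add_const_left _ _
      ((tendsto_atTop_add_const_right _ (-s₀) tendsto_id).const_mul_atTop hε)
  refine tendsto_atTop_mono' _ ?_ hlin
  filter_upwards [eventually_ge_atTop s₀] with s hs
  have := (convex_Ici s₀).mul_sub_le_image_sub_of_le_deriv hd.continuous.continuousOn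
    hd.differentiableOn (fun x hx => hle x (interior_subset hx)) s₀ Set.self_mem_Ici s hs hs
  linarith

theorem tendsto_atBot_of_le_deriv {h : ℝ → ℝ} (hd : Differentiable ℝ h) {s₀ ε : ℝ} (hε : 0 < ε)
    (hle : ∀ s ≤ s₀, ε ≤ deriv h s) : Tendsto h atBot atBot := by
  have hrefl : Tendsto (fun s => -h (-s)) atTop atTop :=
    tendsto_atTop_of_le_deriv (hd.comp differentiable_neg).neg (s₀ := -s₀) hε fun s hs => by
      rw [deriv.fun_neg, deriv_comp_neg, neg_neg]
      exact hle (-s) (neg_le.1 hs)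
  simpa [Function.comp_def] using tendsto_neg_atTop_atBot.comp (hrefl.comp tendsto_neg_atBot_atTop)

namespace IsSteadyState

variable {f V W : ℝ → ℝ}

theorem differentiable_deriv (hV : IsSteadyState f V) : Differentiable ℝ (deriv V) :=
  fun s => (hV.hasDerivAt_deriv s).differentiableAt

theorem const {e : ℝ} (he : f e = 0) : IsSteadyState f fun _ => e where
  differentiable := differentiable_const e
  hasDerivAt_deriv s := by
    rw [deriv_const', he]
    exact hasDerivAt_const s 0

theorem comp_add_const (hV : IsSteadyState f V) (a : ℝ) : IsSteadyState f fun s => V (s + a) where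
  differentiable := hV.differentiable.comp (differentiable_id.add_const a)
  hasDerivAt_deriv s := by
    rw [funext fun t => deriv_comp_add_const V a t]
    exact (hV.hasDerivAt_deriv (s + a)).comp_add_const s a

theorem eq_of_lipschitzOnWith {B : ℝ≥0} {S : Set ℝ} (hf : LipschitzOnWith B f S)
    (hV : IsSteadyState f V) (hVS : ∀ s, V s ∈ S) (hW : IsSteadyState f W) (hWS : ∀ s, W s ∈ S)
    {s₀ : ℝ} (h₀ : V s₀ = W s₀) (h₀' : deriv V s₀ = deriv W s₀) : V = W := by
  have hfield : LipschitzOnWith (max 1 (B * 1)) (fun p : ℝ × ℝ => (p.2, f p.1))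
      (Prod.fst ⁻¹' S) :=
    LipschitzWith.prod_snd.lipschitzOnWith.prodMk
      (hf.comp LipschitzWith.prod_fst.lipschitzOnWith fun _ hp => hp)
  have hsol {V : ℝ → ℝ} (hV : IsSteadyState f V) (t : ℝ) :
      HasDerivAt (fun s => (V s, deriv V s)) (deriv V t, f (V t)) t :=
    (hV.differentiable t).hasDerivAt.prodMk (hV.hasDerivAt_deriv t)
  have heq := ODE_solution_unique_univ (v := fun _ p => (p.2, f p.1)) (t₀ := s₀)
    (fun _ => hfield) (fun t => ⟨hsol hV t, hVS t⟩) (fun t => ⟨hsol hW t, hWS t⟩)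
    (Prod.ext h₀ h₀')
  exact funext fun s => congrArg Prod.fst (congrFun heq s)

theorem eq_const_of_le_of_nonpos (hV : IsSteadyState f V) {M : ℝ} (hM : ∀ s, M ≤ V s)
    (hf : ∀ s, f (V s) ≤ 0) : (∀ s t, V s = V t) ∧ ∀ s, f (V s) = 0 := by
  have hanti : Antitone (deriv V) := antitone_of_hasDerivAt_nonpos hV.hasDerivAt_deriv hf
  have hzero (s₀ : ℝ) : deriv V s₀ = 0 := by
    rcases lt_trichotomy (deriv V s₀) 0 with h | h | h
    · have hlim : Tendsto (fun s => -V s) atTop atTop :=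
        tendsto_atTop_of_le_deriv hV.differentiable.fun_neg (neg_pos.2 h) fun s hs => by
          rw [deriv.fun_neg]
          exact neg_le_neg (hanti hs)
      obtain ⟨s, hs⟩ := (hlim.eventually_gt_atTop (-M)).exists
      linarith [hM s]
    · exact h
    · have hlim := tendsto_atBot_of_le_deriv hV.differentiable h fun s hs => hanti hs
      obtain ⟨s, hs⟩ := (hlim.eventually_lt_atBot M).exists
      exact absurd (hM s) hs.not_ge
  refine ⟨is_const_of_deriv_eq_zero hV.differentiable hzero, fun s => ?_⟩
  rw [← (hV.hasDerivAt_deriv s).deriv, funext hzero, deriv_const]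

theorem energy_eq {F : ℝ → ℝ} (hF : Differentiable ℝ F) (hV : IsSteadyState (deriv F) V)
    (s t : ℝ) : deriv V s ^ 2 - 2 * F (V s) = deriv V t ^ 2 - 2 * F (V t) := by
  have hd (s : ℝ) : HasDerivAt (fun s => deriv V s ^ 2 - 2 * F (V s)) 0 s :=
    (((hV.hasDerivAt_deriv s).pow 2).sub (((hF (V s)).hasDerivAt.comp s
      (hV.differentiable s).hasDerivAt).const_mul 2)).congr_deriv (by norm_num; ring)
  exact is_const_of_deriv_eq_zero (fun s => (hd s).differentiableAt) (fun s => (hd s).deriv) s t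

end IsSteadyState

end OneDimensional

namespace BalancedDoubleWell

variable {F : ℝ → ℝ}

theorem contDiff_deriv (hF : BalancedDoubleWell F) : ContDiff ℝ 2 (deriv F) :=
  ContDiff.deriv' hF.1

theorem differentiable (hF : BalancedDoubleWell F) : Differentiable ℝ F :=
  hF.1.differentiable (by norm_num)

theorem deriv_nonpos (hF : BalancedDoubleWell F) {s : ℝ} (hs : s ∈ Set.Icc 0 1) :
    deriv F s ≤ 0 := by
  obtain ⟨-, -, -, -, -, -, hneg, -, -⟩ := id hF
  rw [← closure_Ioo zero_ne_one] at hs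
  exact closure_minimal (fun t ht => (hneg t ht).le)
    (isClosed_le hF.contDiff_deriv.continuous continuous_const) hs

theorem pos (hF : BalancedDoubleWell F) {s : ℝ} (hs : s ∈ Set.Ioo (-1) 1) : 0 < F s := by
  obtain ⟨-, -, -, -, -, hpos, hneg, hbot, htop⟩ := id hF
  have hcont := hF.differentiable.continuous
  rcases le_total s 0 with h | h
  · have hmono : StrictMonoOn F (Set.Icc (-1) 0) :=
      strictMonoOn_of_deriv_pos (convex_Icc _ _) hcont.continuousOn (by simpa using hpos)
    exact hbot ▸ hmono (Set.left_mem_Icc.2 (by norm_num)) ⟨hs.1.le, h⟩ hs.1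
  · have hanti : StrictAntiOn F (Set.Icc 0 1) :=
      strictAntiOn_of_deriv_neg (convex_Icc _ _) hcont.continuousOn (by simpa using hneg)
    exact htop ▸ hanti ⟨h, hs.2.le⟩ (Set.right_mem_Icc.2 zero_le_one) hs.2

theorem steadyState_eq (hF : BalancedDoubleWell F) {V W : ℝ → ℝ}
    (hV : IsSteadyState (deriv F) V) (hV1 : ∀ s, |V s| ≤ 1)
    (hW : IsSteadyState (deriv F) W) (hW1 : ∀ s, |W s| ≤ 1)
    {s₀ : ℝ} (h₀ : V s₀ = W s₀) (h₀' : deriv V s₀ = deriv W s₀) : V = W := by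
  obtain ⟨_, hlip, -⟩ := exists_lipschitzOnWith_Icc hF.contDiff_deriv 1
  exact IsSteadyState.eq_of_lipschitzOnWith hlip hV (fun s => abs_le.1 (hV1 s)) hW
    (fun s => abs_le.1 (hW1 s)) h₀ h₀'

theorem exists_le_deriv_deriv_near_wells (hF : BalancedDoubleWell F) :
    ∃ δ > 0, ∃ m > 0, (∀ s ∈ Set.Icc (-1) (-1 + δ), m ≤ deriv (deriv F) s) ∧
      ∀ s ∈ Set.Icc (1 - δ) 1, m ≤ deriv (deriv F) s := by
  obtain ⟨-, -, -, hbot, htop, -⟩ := id hF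
  have hcont : Continuous (deriv (deriv F)) :=
    (ContDiff.deriv' (n := 1) hF.contDiff_deriv).continuous
  obtain ⟨m, hm, hm'⟩ := exists_between (lt_min hbot htop)
  obtain ⟨δ₁, hδ₁, h₁⟩ := Metric.eventually_nhds_iff_ball.1
    ((hcont.tendsto (-1)).eventually_const_lt (hm'.trans_le (min_le_left _ _)))
  obtain ⟨δ₂, hδ₂, h₂⟩ := Metric.eventually_nhds_iff_ball.1
    ((hcont.tendsto 1).eventually_const_lt (hm'.trans_le (min_le_right _ _)))
  obtain ⟨δ, hδ, hδ'⟩ := exists_between (lt_min hδ₁ hδ₂)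
  obtain ⟨hlt₁, hlt₂⟩ := lt_min_iff.1 hδ'
  refine ⟨δ, hδ, m, hm, fun s hs => (h₁ s ?_).le, fun s hs => (h₂ s ?_).le⟩ <;>
    rw [Real.ball_eq_Ioo] <;> constructor <;> linarith [hs.1, hs.2]

end BalancedDoubleWell

theorem IsTravelingWave.exists_regularWave {F : ℝ → ℝ} {c : ℝ} {u : ℝ → ℝ → ℝ}
    (hF : BalancedDoubleWell F) (hu : IsTravelingWave F c u) :
    ∃ K, RegularWave (deriv F) c K u := by
  obtain ⟨⟨hC, hpde, hbdd, hpos⟩, htop, hbot⟩ := hu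
  have hu2 : ContDiff ℝ 2 ↿u := hC.of_le (by norm_num)
  have heq (x y : ℝ) : driftLaplacian 0 c u x y = deriv F (u x y) := by
    rw [driftLaplacian, zero_mul, add_zero, hpde]
  obtain ⟨K₁, h₁⟩ := exists_c21With hF.contDiff_deriv hu2 hbdd heq
  obtain ⟨K₂, h₂⟩ := exists_c21With (u := fun x y => u y x) (b := c) (c := 0) hF.contDiff_deriv
    (contDiff_swap hu2) (fun x y => hbdd y x) fun x y => by rw [driftLaplacian_swap, heq]
  exact ⟨K₁ ⊔ K₂, hu2, heq, hbdd, fun x => strictMono_of_deriv_pos (hpos x),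
    fun y => (h₁ y).mono le_sup_left, fun x => (h₂ x).mono le_sup_right, htop, hbot⟩

/-- A decreasing transition layer for `V'' = f V`, centred at the origin. Monotonicity and the
limits `±1` are consequences. -/
structure IsLayer (f g : ℝ → ℝ) : Prop extends IsSteadyState f g where
  abs_le_one : ∀ s, |g s| ≤ 1
  zero : g 0 = 0
  nonneg : ∀ s ≤ 0, 0 ≤ g s
  nonpos : ∀ s, 0 ≤ s → g s ≤ 0
  exists_pos : ∃ s, 0 < g s

namespace IsLayer

variable {F g h : ℝ → ℝ}

theorem antitoneOn_deriv (hF : BalancedDoubleWell F) (hg : IsLayer (deriv F) g) :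
    AntitoneOn (deriv g) (Set.Iic 0) :=
  antitoneOn_of_hasDerivWithinAt_nonpos (convex_Iic 0)
    hg.differentiable_deriv.continuous.continuousOn
    (fun s _ => (hg.hasDerivAt_deriv s).hasDerivWithinAt) fun s hs =>
      hF.deriv_nonpos
        ⟨hg.nonneg s (Set.mem_Iic.1 (interior_subset hs)), (abs_le.1 (hg.abs_le_one s)).2⟩

theorem deriv_nonpos (hF : BalancedDoubleWell F) (hg : IsLayer (deriv F) g) {s : ℝ} (hs : s ≤ 0) :
    deriv g s ≤ 0 := by
  by_contra! hpos
  have hlim := tendsto_atBot_of_le_deriv hg.differentiable hpos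
    fun t ht => hg.antitoneOn_deriv hF (ht.trans hs) hs ht
  obtain ⟨t, hneg, ht⟩ := ((hlim.eventually_lt_atBot 0).and (eventually_le_atBot 0)).exists
  exact absurd (hg.nonneg t ht) hneg.not_ge

theorem antitoneOn (hF : BalancedDoubleWell F) (hg : IsLayer (deriv F) g) :
    AntitoneOn g (Set.Iic 0) :=
  antitoneOn_of_deriv_nonpos (convex_Iic 0) hg.differentiable.continuous.continuousOn
    hg.differentiable.differentiableOn fun _ hs =>
      hg.deriv_nonpos hF (Set.mem_Iic.1 (interior_subset hs))

/-- Otherwise `g'' ≤ max f < 0` on a half-line, so `g'` would become positive. -/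
theorem exists_gt (hF : BalancedDoubleWell F) (hg : IsLayer (deriv F) g) {ε : ℝ} (hε : 0 < ε) :
    ∃ s ≤ 0, 1 - ε < g s := by
  by_contra! hle
  obtain ⟨s₁, hs₁⟩ := hg.exists_pos
  have hs₁0 : s₁ ≤ 0 := by
    by_contra! hlt
    exact absurd (hg.nonpos s₁ hlt.le) hs₁.not_ge
  have hmem (s : ℝ) (hs : s ≤ s₁) : g s ∈ Set.Icc (g s₁) (1 - ε) :=
    ⟨hg.antitoneOn hF (hs.trans hs₁0) hs₁0 hs, hle s (hs.trans hs₁0)⟩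
  obtain ⟨t, ht, hmax⟩ := isCompact_Icc.exists_isMaxOn ⟨_, hmem s₁ le_rfl⟩
    hF.contDiff_deriv.continuous.continuousOn
  obtain ⟨-, -, -, -, -, -, hneg, -, -⟩ := id hF
  have hft : deriv F t < 0 := hneg t ⟨by linarith [ht.1], by linarith [ht.2]⟩
  have hlim : Tendsto (fun s => -deriv g s) atBot atBot :=
    tendsto_atBot_of_le_deriv hg.differentiable_deriv.fun_neg (neg_pos.2 hft) fun s hs => by
      rw [deriv.fun_neg, (hg.hasDerivAt_deriv s).deriv]
      exact neg_le_neg (hmax (hmem s hs))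
  obtain ⟨s, hpos, hs⟩ := ((hlim.eventually_lt_atBot 0).and (eventually_le_atBot 0)).exists
  linarith [hg.deriv_nonpos hF hs]

theorem tendsto_atBot (hF : BalancedDoubleWell F) (hg : IsLayer (deriv F) g) :
    Tendsto g atBot (𝓝 1) := by
  refine tendsto_order.2 ⟨fun b hb => ?_, fun b hb => Eventually.of_forall fun s =>
    ((abs_le.1 (hg.abs_le_one s)).2).trans_lt hb⟩
  obtain ⟨s₀, hs₀, h⟩ := hg.exists_gt hF (sub_pos.2 hb)
  rw [sub_sub_cancel] at h
  filter_upwards [eventually_le_atBot s₀] with s hs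
  exact h.trans_le (hg.antitoneOn hF (hs.trans hs₀) hs₀ hs)

theorem tendsto_deriv_atBot (hF : BalancedDoubleWell F) (hg : IsLayer (deriv F) g) :
    Tendsto (deriv g) atBot (𝓝 0) := by
  refine tendsto_order.2 ⟨fun b hb => ?_, fun b hb => ?_⟩
  · obtain ⟨s₀, hs₀, hlt⟩ : ∃ s ≤ 0, b < deriv g s := by
      by_contra! hle
      have hlim : Tendsto (fun s => -g s) atBot atBot :=
        tendsto_atBot_of_le_deriv hg.differentiable.fun_neg (neg_pos.2 hb) fun s hs => by
          rw [deriv.fun_neg]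
          exact neg_le_neg (hle s hs)
      obtain ⟨s, hs⟩ := (hlim.eventually_lt_atBot (-1)).exists
      linarith [(abs_le.1 (hg.abs_le_one s)).2]
    filter_upwards [eventually_le_atBot s₀] with s hs
    exact hlt.trans_le (hg.antitoneOn_deriv hF (hs.trans hs₀) hs₀ hs)
  · filter_upwards [eventually_le_atBot 0] with s hs
    exact (hg.deriv_nonpos hF hs).trans_lt hb

theorem deriv_sq (hF : BalancedDoubleWell F) (hg : IsLayer (deriv F) g) (s : ℝ) :
    deriv g s ^ 2 = 2 * F (g s) := by
  obtain ⟨-, -, -, -, -, -, -, -, htop⟩ := id hF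
  have hlim : Tendsto (fun s => deriv g s ^ 2 - 2 * F (g s)) atBot (𝓝 (0 ^ 2 - 2 * F 1)) :=
    ((hg.tendsto_deriv_atBot hF).pow 2).sub
      (((hF.differentiable.continuous.tendsto 1).comp (hg.tendsto_atBot hF)).const_mul 2)
  have hconst : Tendsto (fun s => deriv g s ^ 2 - 2 * F (g s)) atBot
      (𝓝 (deriv g s ^ 2 - 2 * F (g s))) :=
    tendsto_const_nhds.congr fun t => hg.energy_eq hF.differentiable s t
  linarith [tendsto_nhds_unique hconst hlim]

theorem unique (hF : BalancedDoubleWell F) (hg : IsLayer (deriv F) g)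
    (hh : IsLayer (deriv F) h) : g = h := by
  have hsq : deriv g 0 ^ 2 = deriv h 0 ^ 2 := by
    rw [hg.deriv_sq hF, hh.deriv_sq hF, hg.zero, hh.zero]
  have hderiv : deriv g 0 = deriv h 0 := by
    rcases sq_eq_sq_iff_eq_or_eq_neg.1 hsq with heq | heq
    · exact heq
    · linarith [hg.deriv_nonpos hF le_rfl, hh.deriv_nonpos hF le_rfl]
  exact hF.steadyState_eq hg.toIsSteadyState hg.abs_le_one hh.toIsSteadyState hh.abs_le_one
    (hg.zero.trans hh.zero.symm) hderiv

theorem deriv_ne_zero (hF : BalancedDoubleWell F) (hg : IsLayer (deriv F) g) (s : ℝ) :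
    deriv g s ≠ 0 := by
  intro hs
  obtain ⟨-, hbot, htop, -⟩ := id hF
  have hne {e : ℝ} (he : deriv F e = 0) (he1 : |e| = 1) : g s ≠ e := by
    intro hge
    have heq := hF.steadyState_eq hg.toIsSteadyState hg.abs_le_one (IsSteadyState.const he)
      (fun _ => he1.le) hge (by rw [hs, deriv_const])
    have hzero : e = 0 := (congrFun heq 0).symm.trans hg.zero
    rw [hzero, abs_zero] at he1
    exact zero_ne_one he1
  obtain ⟨h₁, h₂⟩ := abs_le.1 (hg.abs_le_one s)
  have hFpos : 0 < F (g s) :=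
    hF.pos ⟨h₁.lt_of_ne' (hne hbot (by norm_num)), h₂.lt_of_ne (hne htop (by norm_num))⟩
  have henergy := hg.deriv_sq hF s
  rw [hs] at henergy
  linarith

theorem deriv_neg (hF : BalancedDoubleWell F) (hg : IsLayer (deriv F) g) (s : ℝ) :
    deriv g s < 0 := by
  by_contra! hs
  obtain ⟨t, ht⟩ := mem_range_of_exists_le_of_exists_ge hg.differentiable_deriv.continuous
    ⟨0, hg.deriv_nonpos hF le_rfl⟩ ⟨s, hs⟩
  exact hg.deriv_ne_zero hF t ht

theorem strictAnti (hF : BalancedDoubleWell F) (hg : IsLayer (deriv F) g) : StrictAnti g :=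
  strictAnti_of_deriv_neg (hg.deriv_neg hF)

/-- Otherwise the energy identity bounds `g'` away from zero on a half-line. -/
theorem exists_lt (hF : BalancedDoubleWell F) (hg : IsLayer (deriv F) g) {ε : ℝ} (hε : 0 < ε) :
    ∃ s, g s < -1 + ε := by
  by_contra! hle
  have hmem (s : ℝ) (hs : 0 ≤ s) : g s ∈ Set.Icc (-1 + ε) 0 := ⟨hle s, hg.nonpos s hs⟩
  obtain ⟨t, ht, hmin⟩ := isCompact_Icc.exists_isMinOn ⟨_, hmem 0 le_rfl⟩
    hF.differentiable.continuous.continuousOn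
  have hFt : 0 < F t := hF.pos ⟨by linarith [ht.1], by linarith [ht.2]⟩
  have hspeed (s : ℝ) (hs : 0 ≤ s) : sqrt (F t) ≤ -deriv g s := by
    have hFle : F t ≤ F (g s) := hmin (hmem s hs)
    exact sqrt_le_iff.2 ⟨neg_nonneg.2 (hg.deriv_neg hF s).le, by
      rw [neg_sq, hg.deriv_sq hF]
      linarith⟩
  have hlim : Tendsto (fun s => -g s) atTop atTop :=
    tendsto_atTop_of_le_deriv hg.differentiable.fun_neg (sqrt_pos.2 hFt) fun s hs => by
      rw [deriv.fun_neg]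
      exact hspeed s hs
  obtain ⟨s, hs⟩ := (hlim.eventually_gt_atTop 1).exists
  linarith [(abs_le.1 (hg.abs_le_one s)).1]

end IsLayer

section Compactness

theorem eventually_forall_lt_of_monotone {X : Type*} [TopologicalSpace X] {S : Set X}
    (hS : IsCompact S) {φ : X → ℝ} {g : ℝ → X → ℝ} (hφ : Continuous φ) (hg : ∀ t, Continuous (g t))
    (hmono : ∀ p, Monotone fun t => g t p) (hlt : ∀ p ∈ S, ∃ t, φ p < g t p) :
    ∀ᶠ t in atTop, ∀ p ∈ S, φ p < g t p := by
  have hU : Monotone fun t => {p | φ p < g t p} := fun t t' ht p hp => hp.trans_le (hmono p ht)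
  obtain ⟨t₀, ht₀⟩ := hS.elim_directed_cover _ (fun t => isOpen_lt hφ (hg t))
    (fun p hp => Set.mem_iUnion.2 (hlt p hp)) hU.directed_le
  filter_upwards [eventually_ge_atTop t₀] with t ht p hp
  exact hU ht (ht₀ hp)

theorem eq_of_monotone_of_eqOn_dense {m h : ℝ → ℝ} {D : Set ℝ} (hm : Monotone m)
    (hh : Continuous h) (hD : Dense D) (heq : Set.EqOn m h D) : m = h := by
  refine funext fun θ => le_antisymm (not_lt.1 fun hlt => ?_) (not_lt.1 fun hlt => ?_)
  · obtain ⟨t, ht, hIoo⟩ := mem_nhdsGT_iff_exists_Ioo_subset.1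
      (nhdsWithin_le_nhds ((hh.tendsto θ).eventually_lt_const hlt))
    obtain ⟨θ', hθ', hmem⟩ := hD.exists_between ht
    exact (hIoo hmem).not_ge (heq hθ' ▸ hm hmem.1.le)
  · obtain ⟨t, ht, hIoo⟩ := mem_nhdsLT_iff_exists_Ioo_subset.1
      (nhdsWithin_le_nhds ((hh.tendsto θ).eventually_const_lt hlt))
    obtain ⟨θ', hθ', hmem⟩ := hD.exists_between ht
    exact (hIoo hmem).not_ge (heq hθ' ▸ hm hmem.2.le)

end Compactness

/-- For `y ≥ Y`, the graph of `k` is the zero set of `u` in the right half-plane, and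
`k y = κ log y + C + o(1)`. -/
structure RightBranch (u : ℝ → ℝ → ℝ) (k : ℝ → ℝ) (κ C Y : ℝ) : Prop where
  slope_pos : 0 < κ
  nonneg : ∀ y, Y ≤ y → 0 ≤ k y
  pos : ∀ y, Y ≤ y → ∀ x, 0 ≤ x → x < k y → 0 < u x y
  zero : ∀ y, Y ≤ y → u (k y) y = 0
  neg : ∀ y, Y ≤ y → ∀ x, k y < x → u x y < 0
  continuousOn : ContinuousOn k (Set.Ici Y)
  tendsto_sub_log : Tendsto (fun y => k y - κ * log y) atTop (𝓝 C)

theorem tendsto_atTop_of_tendsto_sub_log {k : ℝ → ℝ} {κ C : ℝ} (hκ : 0 < κ)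
    (hk : Tendsto (fun y => k y - κ * log y) atTop (𝓝 C)) : Tendsto k atTop atTop := by
  simpa using hk.add_atTop (tendsto_log_atTop.const_mul_atTop hκ)

namespace RightBranch

variable {f : ℝ → ℝ} {c : ℝ} {K : ℝ≥0} {u v : ℝ → ℝ → ℝ} {k k' : ℝ → ℝ} {κ C C' Y Y' : ℝ}

theorem tendsto_atTop (hk : RightBranch u k κ C Y) : Tendsto k atTop atTop :=
  tendsto_atTop_of_tendsto_sub_log hk.slope_pos hk.tendsto_sub_log

theorem tendsto_sub (hk : RightBranch u k κ C Y) (hk' : RightBranch v k' κ C' Y') :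
    Tendsto (fun y => k y - k' y) atTop (𝓝 (C - C')) :=
  (hk.tendsto_sub_log.sub hk'.tendsto_sub_log).congr fun _ => sub_sub_sub_cancel_right _ _ _

theorem tendsto_exp_mul_sub (hk : RightBranch u k κ C Y) (θ : ℝ) :
    Tendsto (fun y => k (exp θ * y) - k y) atTop (𝓝 (κ * θ)) := by
  have hscale : Tendsto (fun y => exp θ * y) atTop atTop :=
    tendsto_id.const_mul_atTop (exp_pos θ)
  have hlim := ((hk.tendsto_sub_log.comp hscale).sub hk.tendsto_sub_log).add_const (κ * θ)
  rw [sub_self, zero_add] at hlim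
  refine hlim.congr' ?_
  filter_upwards [eventually_gt_atTop 0] with y hy
  simp only [Function.comp_apply, log_mul (exp_ne_zero θ) hy.ne', log_exp]
  ring

theorem monotoneOn (hk : RightBranch u k κ C Y) (hu : RegularWave f c K u) :
    MonotoneOn k (Set.Ici Y) := by
  intro y hy y' hy' hle
  by_contra! hlt
  exact (hk.pos y hy _ (hk.nonneg y' hy') hlt).not_ge
    (hk.zero y' hy' ▸ (hu.strictMono (k y')).monotone hle)

theorem exists_eq (hk : RightBranch u k κ C Y) {y x : ℝ} (hy : Y ≤ y) (hx : k y ≤ x) :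
    ∃ y', y ≤ y' ∧ k y' = x := by
  obtain ⟨z, hxz, hyz⟩ :=
    ((hk.tendsto_atTop.eventually_ge_atTop x).and (eventually_ge_atTop y)).exists
  obtain ⟨y', hy', heq⟩ := intermediate_value_Icc hyz
    (hk.continuousOn.mono fun t ht => hy.trans ht.1) ⟨hx, hxz⟩
  exact ⟨y', hy'.1, heq⟩

theorem eventually_exists_offset (hk : RightBranch u k κ C Y) (hu : RegularWave f c K u) {q : ℝ}
    (hq : 0 ≤ q) (hκq : κ * q < 1) : ∀ᶠ Z in atTop, ∀ R, ∃ R' ≥ R, ∀ x y, R ≤ x → Z ≤ y →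
      x ≤ k y - R' → Z ≤ exp (-q) * y ∧ x - 1 ≤ k (exp (-q) * y) - R' := by
  obtain ⟨Z₁, hZ₁⟩ := eventually_atTop.1 ((hk.tendsto_exp_mul_sub (-q)).eventually_const_lt
    (show -1 < κ * -q by linarith))
  filter_upwards [eventually_ge_atTop Y, eventually_ge_atTop Z₁, eventually_ge_atTop 0]
    with Z hYZ hZ₁Z hZ R
  refine ⟨max R (k (exp q * Z) - R + 1), le_max_left _ _, fun x y hx hy hxy => ?_⟩
  have hZq : Z ≤ exp q * Z := le_mul_of_one_le_left hZ (one_le_exp hq)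
  have hy' : exp q * Z ≤ y := by
    by_contra! hlt
    have := hk.monotoneOn hu (hYZ.trans hy) (hYZ.trans hZq) hlt.le
    linarith [le_max_right R (k (exp q * Z) - R + 1)]
  refine ⟨?_, by linarith [hZ₁ y (hZ₁Z.trans hy)]⟩
  rwa [exp_neg, le_inv_mul_iff₀ (exp_pos q)]

end RightBranch

namespace RegularWave

variable {F f : ℝ → ℝ} {c : ℝ} {K : ℝ≥0} {u : ℝ → ℝ → ℝ} {k : ℝ → ℝ} {κ C Y : ℝ}

theorem eventually_forall_gt (hu : RegularWave f c K u) {s : Set ℝ} (hs : IsCompact s) {b : ℝ}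
    (hb : b < 1) : ∀ᶠ y in atTop, ∀ x ∈ s, b < u x y :=
  eventually_forall_lt_of_monotone hs (g := fun y x => u x y) continuous_const
    (fun y => (hu.horizontal y).differentiable.continuous)
    (fun x => (hu.strictMono x).monotone)
    fun x _ => ((hu.tendsto_atTop x).eventually_const_lt hb).exists

theorem eventually_forall_lt (hu : RegularWave f c K u) {s : Set ℝ} (hs : IsCompact s) {b : ℝ}
    (hb : -1 < b) : ∀ᶠ y in atBot, ∀ x ∈ s, u x y < b := by
  have hev := eventually_forall_lt_of_monotone hs (g := fun t x => -u x (-t))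
    (continuous_const (y := -b)) (fun t => (hu.horizontal (-t)).differentiable.continuous.neg)
    (fun x t t' ht => neg_le_neg ((hu.strictMono x).monotone (neg_le_neg ht)))
    fun x _ => by
      obtain ⟨y, hy⟩ := ((hu.tendsto_atBot x).eventually_lt_const hb).exists
      exact ⟨-y, by simpa using hy⟩
  simpa using tendsto_neg_atBot_atTop.eventually hev

/-- Otherwise a limit of translates of `u` would be a constant steady state equal to `1 / 2`. -/
theorem exists_forall_gt_half_of_gt_half (hu : RegularWave (deriv F) c K u)
    (hF : BalancedDoubleWell F) (hk : RightBranch u k κ C Y) {q : ℝ} (hq : 0 < q) :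
    ∃ R, ∀ x y, R ≤ x → R ≤ y → x ≤ k y - R → 1 / 2 < u (x - 1) (exp (-q) * y) →
      1 / 2 < u x y := by
  by_contra! h
  choose x y hx hy hxy hlt hle using fun n : ℕ => h n
  have hn : Tendsto (fun n : ℕ => (n : ℝ)) atTop atTop := tendsto_natCast_atTop_atTop
  have hy' : Tendsto y atTop atTop := tendsto_atTop_mono hy hn
  have h𝒰 : (hyperfilter ℕ : Filter ℕ) ≤ atTop := Nat.hyperfilter_le_atTop
  obtain ⟨a, ha, hdense⟩ := hu.exists_dense_isSteadyState hF.contDiff_deriv.continuous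
    (hyperfilter ℕ) x (hy'.mono_left h𝒰)
  obtain ⟨θ, hθ, hqθ, hθ0⟩ := hdense.exists_between (neg_lt_zero.2 hq)
  have hyθ : Tendsto (fun n => exp θ * y n) atTop atTop := hy'.const_mul_atTop (exp_pos θ)
  have hy0 (n : ℕ) : 0 ≤ y n := n.cast_nonneg.trans (hy n)
  have hnonneg (s : ℝ) : 0 ≤ a s θ := by
    refine ge_of_tendsto (ha s θ) (h𝒰 ?_)
    filter_upwards [hn.eventually_ge_atTop (-s), hn.eventually_gt_atTop (s + 1 - κ * θ),
      hyθ.eventually_ge_atTop Y, ((hk.tendsto_exp_mul_sub θ).comp hy').eventually_const_lt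
        (sub_one_lt (κ * θ))] with n hns hns' hYn hkn
    simp only [Function.comp_apply] at hkn
    exact (hk.pos _ hYn _ (by linarith [hx n]) (by linarith [hxy n])).le
  have hle_one (s : ℝ) : a s θ ≤ 1 :=
    le_of_tendsto (ha s θ) (Eventually.of_forall fun n => (abs_le.1 (hu.abs_le_one _ _)).2)
  obtain ⟨hconst, hzero⟩ := hθ.eq_const_of_le_of_nonpos hnonneg
    fun s => hF.deriv_nonpos ⟨hnonneg s, hle_one s⟩
  have hle_half : a 0 θ ≤ 1 / 2 :=
    le_of_tendsto (ha 0 θ) (Eventually.of_forall fun n => by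
      rw [add_zero]
      exact ((hu.strictMono _).monotone
        (mul_le_of_le_one_left (hy0 n) (exp_le_one_iff.2 hθ0.le))).trans (hle n))
  have hhalf_le : 1 / 2 ≤ a (-1) θ :=
    ge_of_tendsto (ha (-1) θ) (Eventually.of_forall fun n => (hlt n).le.trans
      ((hu.strictMono _).monotone (mul_le_mul_of_nonneg_right (exp_le_exp.2 hqθ.le) (hy0 n))))
  have hhalf : a 0 θ = 1 / 2 := le_antisymm hle_half (hconst 0 (-1) ▸ hhalf_le)
  obtain ⟨-, -, -, -, -, -, hneg, -, -⟩ := id hF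
  exact (hneg (1 / 2) (by norm_num)).ne (hhalf ▸ hzero 0)

theorem exists_eventually_gt_half (hu : RegularWave (deriv F) c K u) (hF : BalancedDoubleWell F)
    (hk : RightBranch u k κ C Y) :
    ∃ R, ∀ᶠ y in atTop, ∀ x, R ≤ x → x ≤ k y - R → 1 / 2 < u x y := by
  obtain ⟨q, hq, hκq⟩ : ∃ q > 0, κ * q < 1 := by
    have hκ := hk.slope_pos
    exact ⟨1 / (2 * κ), by positivity, by field_simp; norm_num⟩
  obtain ⟨R, hR⟩ := hu.exists_forall_gt_half_of_gt_half hF hk hq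
  obtain ⟨Z, hZ⟩ := eventually_atTop.1 (hu.eventually_forall_gt
    (isCompact_Icc (a := R) (b := R + 1)) (show (1 / 2 : ℝ) < 1 by norm_num))
  obtain ⟨Z', hoffset, hRZ', hZZ'⟩ := ((hk.eventually_exists_offset hu hq.le hκq).and
    ((eventually_ge_atTop R).and (eventually_ge_atTop Z))).exists
  obtain ⟨R', hRR', hR'⟩ := hoffset R
  have hstrip (n : ℕ) : ∀ x y, Z' ≤ y → R ≤ x → x ≤ R + n + 1 → x ≤ k y - R' → 1 / 2 < u x y := by
    induction n with
    | zero =>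
      intro x y hy hx hxn _
      exact hZ y (hZZ'.trans hy) x ⟨hx, by simpa using hxn⟩
    | succ n ih =>
      intro x y hy hx hxn hxy
      push_cast at hxn
      rcases le_total x (R + 1) with hx' | hx'
      · exact hZ y (hZZ'.trans hy) x ⟨hx, hx'⟩
      · obtain ⟨hy', hxy'⟩ := hR' x y hx hy hxy
        exact hR x y hx (hRZ'.trans hy) (by linarith)
          (ih (x - 1) _ hy' (by linarith) (by linarith) hxy')
  refine ⟨R', eventually_atTop.2 ⟨Z', fun y hy x hx hxy => ?_⟩⟩
  obtain ⟨n, hn⟩ := exists_nat_ge (x - R)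
  exact hstrip n x y hy (hRR'.trans hx) (by linarith) hxy

theorem isLayer_of_tendsto (hu : RegularWave (deriv F) c K u) (hF : BalancedDoubleWell F)
    (hk : RightBranch u k κ C Y) {ι : Type*} {l : Filter ι} [l.NeBot] {y : ι → ℝ}
    (hy : Tendsto y l atTop) {V : ℝ → ℝ} (hV : IsSteadyState (deriv F) V)
    (hlim : ∀ s, Tendsto (fun i => u (k (y i) + s) (y i)) l (𝓝 (V s))) : IsLayer (deriv F) V := by
  have hYy := hy.eventually_ge_atTop Y
  have hky := hk.tendsto_atTop.comp hy
  have hzero : V 0 = 0 := by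
    refine tendsto_nhds_unique (hlim 0) (tendsto_const_nhds.congr' ?_)
    filter_upwards [hYy] with i hi
    rw [add_zero, hk.zero _ hi]
  refine ⟨hV, fun s => le_of_tendsto (hlim s).abs (Eventually.of_forall fun i => hu.abs_le_one _ _),
    hzero, fun s hs => ?_, fun s hs => ?_, ?_⟩
  · rcases hs.eq_or_lt with rfl | hs
    · exact hzero.ge
    refine ge_of_tendsto (hlim s) ?_
    filter_upwards [hYy, hky.eventually_ge_atTop (-s)] with i hi hki
    simp only [Function.comp_apply] at hki
    exact (hk.pos _ hi _ (by linarith) (by linarith)).le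
  · rcases hs.eq_or_lt with rfl | hs
    · exact hzero.le
    refine le_of_tendsto (hlim s) ?_
    filter_upwards [hYy] with i hi
    exact (hk.neg _ hi _ (by linarith)).le
  · obtain ⟨R, hR⟩ := hu.exists_eventually_gt_half hF hk
    refine ⟨-R, one_half_pos.trans_le (ge_of_tendsto (hlim (-R)) ?_)⟩
    filter_upwards [hy.eventually hR, hky.eventually_ge_atTop (R + R)] with i hi hki
    simp only [Function.comp_apply] at hki
    exact (hi _ (by linarith) (by linarith)).le

theorem exists_dense_isLayer (hu : RegularWave (deriv F) c K u) (hF : BalancedDoubleWell F)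
    (hk : RightBranch u k κ C Y) {𝒰 : Ultrafilter ℝ} (h𝒰 : ↑𝒰 ≤ (atTop : Filter ℝ)) :
    ∃ a : ℝ → ℝ → ℝ, (∀ s θ, Tendsto (fun y => u (k y + s) (exp θ * y)) 𝒰 (𝓝 (a s θ))) ∧
      Dense {θ | IsLayer (deriv F) fun s => a (s + κ * θ) θ} := by
  obtain ⟨a, ha, hdense⟩ := hu.exists_dense_isSteadyState hF.contDiff_deriv.continuous 𝒰 k
    (tendsto_id.mono_left h𝒰)
  refine ⟨a, ha, hdense.mono fun θ hθ => ?_⟩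
  refine hu.isLayer_of_tendsto hF hk
    ((tendsto_id.const_mul_atTop (exp_pos θ)).mono_left h𝒰) (hθ.comp_add_const (κ * θ))
    fun s => hu.tendsto_of_tendsto_sub (ha (s + κ * θ) θ) ?_
  have hshift := ((hk.tendsto_exp_mul_sub θ).sub_const (κ * θ)).mono_left h𝒰
  rw [sub_self] at hshift
  refine hshift.congr fun y => ?_
  simp only [id]
  ring

/-- Any subsequential limit is a monotone function of `θ` which agrees with `g (s - κ * θ)` on a
dense set, hence everywhere. -/
theorem exists_layer (hu : RegularWave (deriv F) c K u) (hF : BalancedDoubleWell F)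
    (hk : RightBranch u k κ C Y) :
    ∃ g, IsLayer (deriv F) g ∧ ∀ s, Tendsto (fun y => u (k y + s) y) atTop (𝓝 (g s)) := by
  obtain ⟨g, hg⟩ : ∃ g, IsLayer (deriv F) g := by
    obtain ⟨_, -, hdense⟩ := hu.exists_dense_isLayer hF hk (Ultrafilter.of_le atTop)
    exact ⟨_, hdense.nonempty.choose_spec⟩
  refine ⟨g, hg, fun s => (tendsto_iff_ultrafilter _ _ _).2 fun 𝒰 h𝒰 => ?_⟩
  obtain ⟨a, ha, hdense⟩ := hu.exists_dense_isLayer hF hk h𝒰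
  have hmono : Monotone (a s) := fun θ θ' hθ =>
    le_of_tendsto_of_tendsto (ha s θ) (ha s θ') <| h𝒰 <| by
      filter_upwards [eventually_ge_atTop 0] with y hy
      exact (hu.strictMono _).monotone (mul_le_mul_of_nonneg_right (exp_le_exp.2 hθ) hy)
  have heq : a s = fun θ => g (s - κ * θ) :=
    eq_of_monotone_of_eqOn_dense hmono
      (hg.differentiable.continuous.comp (by fun_prop)) hdense fun θ hθ => by
        simpa using congrFun (hθ.unique hF hg) (s - κ * θ)
  simpa [heq] using ha s 0

theorem exists_eventually_lt_of_right (hu : RegularWave (deriv F) c K u)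
    (hF : BalancedDoubleWell F) (hk : RightBranch u k κ C Y) {δ : ℝ} (hδ : 0 < δ) :
    ∃ R, ∀ᶠ y in atTop, ∀ x, k y + R ≤ x → u x y < -1 + δ := by
  obtain ⟨g, hg, hlim⟩ := hu.exists_layer hF hk
  obtain ⟨s, hs⟩ := hg.exists_lt hF hδ
  obtain ⟨Z, hZ⟩ := eventually_atTop.1 ((hlim s).eventually_lt_const hs)
  refine ⟨s, ?_⟩
  filter_upwards [eventually_ge_atTop Z, eventually_ge_atTop Y] with y hZy hYy x hx
  obtain ⟨y', hyy', hky'⟩ := hk.exists_eq (x := x - s) hYy (by linarith)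
  have hlt := hZ y' (hZy.trans hyy')
  rw [hky', sub_add_cancel] at hlt
  exact ((hu.strictMono x).monotone hyy').trans_lt hlt

theorem exists_eventually_gt_of_left (hu : RegularWave (deriv F) c K u)
    (hF : BalancedDoubleWell F) (hk : RightBranch u k κ C Y) {δ : ℝ} (hδ : 0 < δ) (A : ℝ) :
    ∃ R, ∀ᶠ y in atTop, ∀ x, A ≤ x → x ≤ k y - R → 1 - δ < u x y := by
  obtain ⟨g, hg, hlim⟩ := hu.exists_layer hF hk
  obtain ⟨s, -, hs⟩ := hg.exists_gt hF hδ
  obtain ⟨Z, hYZ, hZ⟩ := ((eventually_ge_atTop Y).and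
    (eventually_forall_ge_atTop.2 ((hlim s).eventually_const_lt hs))).exists
  refine ⟨-s, ?_⟩
  filter_upwards [eventually_ge_atTop Z, hu.eventually_forall_gt
    (isCompact_Icc (a := A) (b := k Z + s)) (sub_lt_self 1 hδ)] with y hZy hy x hAx hx
  rcases le_total (x - s) (k Z) with hxZ | hxZ
  · exact hy x ⟨hAx, by linarith⟩
  · obtain ⟨y', hy', hky'⟩ := intermediate_value_Icc hZy
      (hk.continuousOn.mono fun t ht => hYZ.trans ht.1) ⟨hxZ, (by linarith : x - s ≤ k y)⟩
    have hlt := hZ y' hy'.1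
    rw [hky', sub_add_cancel] at hlt
    exact hlt.trans_le ((hu.strictMono x).monotone hy'.2)

end RegularWave

section Sliding

theorem zero_mem_of_forall_exists_lt {T : Set ℝ} (hT : IsClosed T) (hne : T.Nonempty)
    (hnonneg : ∀ t ∈ T, 0 ≤ t) (hlt : ∀ τ ∈ T, 0 < τ → ∃ t ∈ T, t < τ) : (0 : ℝ) ∈ T := by
  have hbdd : BddBelow T := ⟨0, hnonneg⟩
  have hinf : sInf T ∈ T := hT.csInf_mem hne hbdd
  rcases (hnonneg _ hinf).eq_or_lt with h0 | h0
  · exact h0 ▸ hinf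
  · obtain ⟨t, ht, htlt⟩ := hlt _ hinf h0
    exact absurd (csInf_le hbdd ht) htlt.not_ge

namespace RegularWave

variable {F f : ℝ → ℝ} {c lam : ℝ} {K : ℝ≥0} {u v : ℝ → ℝ → ℝ} {k k' : ℝ → ℝ} {κ C C' Y Y' : ℝ}

theorem translate (hu : RegularWave f c K u) (t : ℝ) :
    RegularWave f c K fun x y => u x (y + t) where
  contDiff := by simpa using contDiff_translate hu.contDiff 0 t
  pde x y := by simpa [hu.pde] using driftLaplacian_translate u 0 c 0 t x y
  abs_le_one x y := hu.abs_le_one x (y + t)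
  strictMono x := (hu.strictMono x).comp (add_left_strictMono (a := t))
  horizontal y := hu.horizontal (y + t)
  vertical x := by simpa only [add_comm] using (hu.vertical x).comp_const_add t
  tendsto_atTop x := (hu.tendsto_atTop x).comp (tendsto_atTop_add_const_right _ t tendsto_id)
  tendsto_atBot x := (hu.tendsto_atBot x).comp (tendsto_atBot_add_const_right _ t tendsto_id)

theorem lt_one (hu : RegularWave f c K u) (x y : ℝ) : u x y < 1 :=
  (hu.strictMono x (lt_add_one y)).trans_le (abs_le.1 (hu.abs_le_one x _)).2

theorem driftLaplacian_sub (hu : RegularWave f c K u) (hv : RegularWave f c K v) (x y : ℝ) :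
    driftLaplacian 0 c (fun x y => v x y - u x y) x y = f (v x y) - f (u x y) := by
  rw [_root_.driftLaplacian_sub hv.contDiff hu.contDiff, hu.pde, hv.pde]

/-- Where `v < u`, both values are near the same well, on which `f` is increasing; so the maximum
principle applies to `v - u`. -/
theorem le_of_transition (hu : RegularWave f c K u) (hv : RegularWave f c K v)
    (hf : Differentiable ℝ f) {δ m : ℝ} (hm : 0 < m)
    (hneg : ∀ s ∈ Set.Icc (-1) (-1 + δ), m ≤ deriv f s)
    (hpos : ∀ s ∈ Set.Icc (1 - δ) 1, m ≤ deriv f s) (hline : ∀ y, u lam y ≤ v lam y)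
    (htrans : ∀ x y, lam ≤ x → -1 + δ ≤ u x y → v x y ≤ 1 - δ → u x y ≤ v x y) {x : ℝ}
    (hx : lam ≤ x) (y : ℝ) : u x y ≤ v x y := by
  have hincr {a b s t : ℝ} (hder : ∀ s ∈ Set.Icc a b, m ≤ deriv f s) (ha : a ≤ s) (hst : s ≤ t)
      (hb : t ≤ b) : m * (t - s) ≤ f t - f s :=
    (convex_Icc a b).mul_sub_le_image_sub_of_le_deriv hf.continuous.continuousOn
      hf.differentiableOn (fun s hs => hder s (interior_subset hs)) s ⟨ha, hst.trans hb⟩ t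
      ⟨ha.trans hst, hb⟩ hst
  refine sub_nonneg.1 (nonneg_of_driftLaplacian_le_of_halfPlane (b := 0) (c := c) (A := 2)
    (contDiff_sub hv.contDiff hu.contDiff) hm (fun x y => ?_) (fun y => sub_nonneg.2 (hline y))
    (fun x y hx hlt => ?_) hx y)
  · linarith [(abs_le.1 (hv.abs_le_one x y)).1, (abs_le.1 (hu.abs_le_one x y)).2]
  · rw [hu.driftLaplacian_sub hv]
    have hvu : v x y < u x y := sub_neg.1 hlt
    rcases lt_or_ge (u x y) (-1 + δ) with hux | hux
    · linarith [hincr hneg (abs_le.1 (hv.abs_le_one x y)).1 hvu.le hux.le]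
    · have hvx : 1 - δ < v x y := not_le.1 fun h => (htrans x y hx.le hux h).not_gt hvu
      linarith [hincr hpos hvx.le hvu.le (abs_le.1 (hu.abs_le_one x y)).2]

theorem lt_of_le (hu : RegularWave f c K u) (hv : RegularWave f c K v) {B : ℝ≥0}
    (hf : LipschitzOnWith B f (Set.Icc (-1) 1)) (hle : ∀ x y, lam ≤ x → u x y ≤ v x y) {x₀ y₀ : ℝ}
    (hx₀ : lam < x₀) (hlt : u x₀ y₀ < v x₀ y₀) {x : ℝ} (hx : lam < x) (y : ℝ) : u x y < v x y := by
  refine sub_pos.1 (pos_of_halfPlane (b := 0) (c := c) (K := B + 1)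
    (contDiff_sub hv.contDiff hu.contDiff) (by positivity) (fun x y hx => sub_nonneg.2 (hle x y hx))
    (fun x y hx => ?_) hx₀ (sub_pos.2 hlt) hx y)
  rw [hu.driftLaplacian_sub hv]
  have hvu := sub_nonneg.2 (hle x y hx)
  calc f (v x y) - f (u x y) ≤ |f (v x y) - f (u x y)| := le_abs_self _
    _ ≤ B * |v x y - u x y| :=
      hf.dist_le_mul _ (abs_le.1 (hv.abs_le_one x y)) _ (abs_le.1 (hu.abs_le_one x y))
    _ ≤ (B + 1) * (v x y - u x y) := by rw [abs_of_nonneg hvu]; linarith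

theorem lt_of_le_of_lt_on_line (hu : RegularWave f c K u) (hv : RegularWave f c K v) {B : ℝ≥0}
    (hf : LipschitzOnWith B f (Set.Icc (-1) 1)) (hle : ∀ x y, lam ≤ x → u x y ≤ v x y)
    (hline : ∀ y, u lam y < v lam y) {x : ℝ} (hx : lam ≤ x) (y : ℝ) : u x y < v x y := by
  rcases hx.eq_or_lt with rfl | hx
  · exact hline y
  · have hnear : ∀ᶠ x in 𝓝[>] lam, u x 0 < v x 0 := nhdsWithin_le_nhds
      ((hu.horizontal 0).differentiable.continuous.tendsto lam |>.eventually_lt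
        ((hv.horizontal 0).differentiable.continuous.tendsto lam) (hline 0))
    obtain ⟨x₀, hlt, hx₀⟩ := (hnear.and self_mem_nhdsWithin).exists
    exact hu.lt_of_le hv hf hle hx₀ hlt hx y

theorem exists_eventually_abs_sub_le (hu : RegularWave (deriv F) c K u)
    (hv : RegularWave (deriv F) c K v) (hF : BalancedDoubleWell F) (hk : RightBranch u k κ C Y)
    (hk' : RightBranch v k' κ C' Y') {δ : ℝ} (hδ : 0 < δ) (lam : ℝ) :
    ∃ D, ∀ᶠ y in atTop, ∀ x, lam ≤ x → -1 + δ ≤ u x y → v x y ≤ 1 - δ → |x - k y| ≤ D := by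
  obtain ⟨R, hR⟩ := hu.exists_eventually_lt_of_right hF hk hδ
  obtain ⟨R', hR'⟩ := hv.exists_eventually_gt_of_left hF hk' hδ lam
  refine ⟨max R (R' + (C - C') + 1), ?_⟩
  filter_upwards [hR, hR', (hk.tendsto_sub hk').eventually_lt_const (lt_add_one _)]
    with y hy hy' hkk' x hx hux hvx
  have hright : x < k y + R := not_le.1 fun h => (hy x h).not_ge hux
  have hleft : k' y - R' < x := not_le.1 fun h => (hy' x hx h).not_ge hvx
  rw [abs_le]
  constructor
  · linarith [le_max_right R (R' + (C - C') + 1)]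
  · linarith [le_max_left R (R' + (C - C') + 1)]

/-- Near their right branches both waves approach the same strictly decreasing layer, with the one
of `v` farther to the right. -/
theorem eventually_lt_of_transition (hu : RegularWave (deriv F) c K u)
    (hv : RegularWave (deriv F) c K v) (hF : BalancedDoubleWell F) (hk : RightBranch u k κ C Y)
    (hk' : RightBranch v k' κ C' Y') (hC : C < C') {δ : ℝ} (hδ : 0 < δ) (lam : ℝ) :
    ∀ᶠ y in atTop, ∀ x, lam ≤ x → -1 + δ ≤ u x y → v x y ≤ 1 - δ → u x y < v x y := by
  obtain ⟨D, hD⟩ := hu.exists_eventually_abs_sub_le hv hF hk hk' hδ lam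
  by_contra h
  obtain ⟨y, hy, hyp⟩ := exists_seq_forall_of_frequently ((not_eventually.1 h).and_eventually hD)
  choose hnot hbound using hyp
  push Not at hnot
  choose x hx hux hvx hle using hnot
  obtain ⟨σ, hσ⟩ := exists_tendsto_of_abs_le (hyperfilter ℕ) (g := fun n => x n - k (y n))
    fun n => hbound n (x n) (hx n) (hux n) (hvx n)
  have hy : Tendsto y (hyperfilter ℕ) atTop := hy.mono_left Nat.hyperfilter_le_atTop
  obtain ⟨g, hg, hgu⟩ := hu.exists_layer hF hk
  obtain ⟨g', hg', hgv⟩ := hv.exists_layer hF hk'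
  obtain rfl : g = g' := hg.unique hF hg'
  have hxu : Tendsto (fun n => x n - (k (y n) + σ)) (hyperfilter ℕ) (𝓝 0) := by
    simpa [sub_sub] using hσ.sub_const σ
  have hxv : Tendsto (fun n => x n - (k' (y n) + (σ + (C - C')))) (hyperfilter ℕ) (𝓝 0) := by
    have := hxu.add (((hk.tendsto_sub hk').comp hy).sub_const (C - C'))
    rw [sub_self, add_zero] at this
    exact this.congr fun n => by simp only [Function.comp_apply]; ring
  have hlim_u := hu.tendsto_of_tendsto_sub ((hgu σ).comp hy) hxu
  have hlim_v := hv.tendsto_of_tendsto_sub ((hgv (σ + (C - C'))).comp hy) hxv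
  have := le_of_tendsto_of_tendsto' hlim_v hlim_u hle
  exact (hg.strictAnti hF (by linarith : σ + (C - C') < σ)).not_ge this

theorem exists_isCompact_forall_le (hu : RegularWave (deriv F) c K u)
    (hv : RegularWave (deriv F) c K v) (hF : BalancedDoubleWell F) (hk : RightBranch u k κ C Y)
    (hk' : RightBranch v k' κ C' Y') (hC : C < C') (hline : ∀ y, u lam y ≤ v lam y) :
    ∃ S : Set (ℝ × ℝ), IsCompact S ∧ (∀ p ∈ S, lam ≤ p.1) ∧
      ∀ t, 0 ≤ t → (∀ p ∈ S, u p.1 p.2 ≤ v p.1 (p.2 + t)) →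
        ∀ x y, lam ≤ x → u x y ≤ v x (y + t) := by
  obtain ⟨δ, hδ, m, hm, hneg, hpos⟩ := hF.exists_le_deriv_deriv_near_wells
  obtain ⟨R, hR⟩ := hu.exists_eventually_lt_of_right hF hk hδ
  obtain ⟨Z, htop, hright⟩ := (eventually_forall_ge_atTop.2
    (hu.eventually_lt_of_transition hv hF hk hk' hC hδ lam) |>.and hR).exists
  obtain ⟨a, hbot⟩ := (hu.eventually_forall_lt (isCompact_Icc (a := lam) (b := k Z + R))
    (lt_add_of_pos_right (-1) hδ)).exists
  refine ⟨Set.Icc lam (k Z + R) ×ˢ Set.Icc a Z, isCompact_Icc.prod isCompact_Icc,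
    fun p hp => hp.1.1, fun t ht hS x y hx => ?_⟩
  have hshift (x y : ℝ) : v x y ≤ v x (y + t) :=
    (hv.strictMono x).monotone (le_add_of_nonneg_right ht)
  refine hu.le_of_transition (hv.translate t) (hF.contDiff_deriv.differentiable two_ne_zero) hm hneg
    hpos (fun y => (hline y).trans (hshift lam y)) (fun x y hx hux hvx => ?_) hx y
  rcases le_total Z y with hZ | hZ
  · exact (htop y hZ x hx hux ((hshift x y).trans hvx)).le.trans (hshift x y)
  have hxR : x ≤ k Z + R := le_of_not_ge fun h =>
    (hright x h).not_ge (hux.trans ((hu.strictMono x).monotone hZ))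
  have hay : a ≤ y := le_of_not_ge fun h =>
    (hbot x ⟨hx, hxR⟩).not_ge (hux.trans ((hu.strictMono x).monotone h))
  exact hS (x, y) ⟨⟨hx, hxR⟩, hay, hZ⟩

theorem continuous_translate (hv : RegularWave f c K v) :
    Continuous fun q : ℝ × ℝ × ℝ => v q.2.1 (q.2.2 + q.1) :=
  hv.contDiff.continuous.comp (by fun_prop : Continuous fun q : ℝ × ℝ × ℝ => (q.2.1, q.2.2 + q.1))

theorem eventually_forall_lt_translate (hu : RegularWave f c K u) (hv : RegularWave f c K v)
    {S : Set (ℝ × ℝ)} (hS : IsCompact S) :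
    ∀ᶠ t in atTop, ∀ p ∈ S, u p.1 p.2 < v p.1 (p.2 + t) :=
  eventually_forall_lt_of_monotone hS (g := fun t p => v p.1 (p.2 + t)) hu.contDiff.continuous
    (fun t => hv.continuous_translate.comp (Continuous.prodMk_right t))
    (fun p _ _ ht => (hv.strictMono p.1).monotone (add_le_add_right ht p.2))
    fun p _ => ((hv.tendsto_atTop p.1).comp (tendsto_atTop_add_const_left _ p.2 tendsto_id)
      |>.eventually_const_lt (hu.lt_one p.1 p.2)).exists

theorem isClosed_setOf_le_translate (hv : RegularWave f c K v) (u : ℝ → ℝ → ℝ) (lam : ℝ) :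
    IsClosed {t : ℝ | 0 ≤ t ∧ ∀ x y, lam ≤ x → u x y ≤ v x (y + t)} := by
  have hvt (x y : ℝ) : Continuous fun t => v x (y + t) :=
    (hv.vertical x).differentiable.continuous.comp (continuous_const_add y)
  simp only [Set.ofPred_and, Set.ofPred_forall]
  exact isClosed_Ici.inter (isClosed_iInter fun x => isClosed_iInter fun y =>
    isClosed_iInter fun _ => isClosed_le continuous_const (hvt x y))

/-- Slide `v` from far above: as long as the shift is positive, the strong maximum principle keeps
`u` strictly below, so on the compact set which decides the comparison there is room to go on. -/
theorem le_of_rightBranch_lt (hu : RegularWave (deriv F) c K u)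
    (hv : RegularWave (deriv F) c K v) (hF : BalancedDoubleWell F) (hk : RightBranch u k κ C Y)
    (hk' : RightBranch v k' κ C' Y') (hC : C < C') (hline : ∀ y, u lam y ≤ v lam y) {x : ℝ}
    (hx : lam ≤ x) (y : ℝ) : u x y ≤ v x y := by
  obtain ⟨S, hS, hSlam, hred⟩ := hu.exists_isCompact_forall_le hv hF hk hk' hC hline
  obtain ⟨B, hB, -⟩ := exists_lipschitzOnWith_Icc hF.contDiff_deriv 1
  obtain ⟨t₀, ht₀, hSt₀⟩ :=
    ((eventually_ge_atTop 0).and (hu.eventually_forall_lt_translate hv hS)).exists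
  have hzero := zero_mem_of_forall_exists_lt (hv.isClosed_setOf_le_translate u lam)
    ⟨t₀, ht₀, hred t₀ ht₀ fun p hp => (hSt₀ p hp).le⟩ (fun t ht => ht.1) fun τ hτ hτpos => by
      have hstrict {x : ℝ} (hx : lam ≤ x) (y : ℝ) : u x y < v x (y + τ) :=
        hu.lt_of_le_of_lt_on_line (hv.translate τ) hB hτ.2
          (fun y => (hline y).trans_lt (hv.strictMono lam (lt_add_of_pos_right y hτpos))) hx y
      have hnear : ∀ᶠ t in 𝓝 τ, ∀ p ∈ S, u p.1 p.2 < v p.1 (p.2 + t) :=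
        hS.eventually_forall_of_forall_eventually fun p hp =>
          (isOpen_lt (hu.contDiff.continuous.comp continuous_snd)
            hv.continuous_translate).mem_nhds (hstrict (hSlam p hp) p.2)
      obtain ⟨t, ⟨hSt, ht⟩, htτ⟩ := (((hnear.and (Ici_mem_nhds hτpos)).filter_mono
        nhdsWithin_le_nhds).and (self_mem_nhdsWithin (s := Set.Iio τ))).exists
      exact ⟨t, ⟨ht, hred t ht fun p hp => (hSt p hp).le⟩, htτ⟩
  simpa using hzero.2 x y hx

theorem lt_of_rightBranch_lt (hu : RegularWave (deriv F) c K u)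
    (hv : RegularWave (deriv F) c K v) (hF : BalancedDoubleWell F) (hk : RightBranch u k κ C Y)
    (hk' : RightBranch v k' κ C' Y') (hC : C < C') (hline : ∀ y, u lam y ≤ v lam y) {x : ℝ}
    (hx : lam < x) (y : ℝ) : u x y < v x y := by
  obtain ⟨B, hB, -⟩ := exists_lipschitzOnWith_Icc hF.contDiff_deriv 1
  obtain ⟨y₀, hlam, hlt, hY, hY'⟩ := ((hk.tendsto_atTop.eventually_gt_atTop lam).and
    (((hk.tendsto_sub hk').eventually_lt_const (sub_neg.2 hC)).and
      ((eventually_ge_atTop Y).and (eventually_ge_atTop Y')))).exists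
  refine hu.lt_of_le hv hB
    (fun x y hx => hu.le_of_rightBranch_lt hv hF hk hk' hC hline hx y) hlam (y₀ := y₀) ?_ hx y
  rw [hk.zero y₀ hY]
  exact hk'.pos y₀ hY' _ (hk.nonneg y₀ hY) (sub_neg.1 hlt)

end RegularWave

theorem RightBranch.le_of_forall_lt {u v : ℝ → ℝ → ℝ} {k k' : ℝ → ℝ} {κ C C' Y Y' lam : ℝ}
    (hk : RightBranch u k κ C Y) (hk' : RightBranch v k' κ C' Y')
    (h : ∀ x y, lam < x → u x y < v x y) : C ≤ C' := by
  by_contra! hC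
  obtain ⟨y, hlam, hlt, hY, hY'⟩ := ((hk.tendsto_atTop.eventually_gt_atTop lam).and
    (((hk.tendsto_sub hk').eventually_const_lt (sub_pos.2 hC)).and
      ((eventually_ge_atTop Y).and (eventually_ge_atTop Y')))).exists
  have := h (k y) y hlam
  rw [hk.zero y hY] at this
  exact (hk'.neg y hY' _ (sub_pos.1 hlt)).not_gt this

end Sliding

section LevelSet

variable {f : ℝ → ℝ} {c : ℝ} {K : ℝ≥0} {u : ℝ → ℝ → ℝ} {k₁ k₂ : ℝ → ℝ} {Y₀ κ C : ℝ}

theorem RegularWave.exists_rightBranch (hu : RegularWave f c K u) (hκ : 0 < κ)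
    (hcont : ContinuousOn k₂ (Set.Ioi Y₀))
    (hlevel : ∀ y, Y₀ < y → {x | u x y = 0} = {k₁ y, k₂ y}) (hk₁ : Tendsto k₁ atTop atBot)
    (hlim : Tendsto (fun y => k₂ y - κ * log y) atTop (𝓝 C)) : ∃ Y, RightBranch u k₂ κ C Y := by
  have hk₂ := tendsto_atTop_of_tendsto_sub_log hκ hlim
  obtain ⟨Y, hY⟩ := eventually_atTop.1 ((eventually_gt_atTop Y₀).and
    ((hk₁.eventually_lt_atBot 0).and ((hk₂.eventually_ge_atTop 0).and
      ((hu.tendsto_atTop 0).eventually_const_lt one_pos))))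
  have hzero (y : ℝ) (hy : Y ≤ y) : u (k₂ y) y = 0 :=
    (Set.ext_iff.1 (hlevel y (hY y hy).1) _).2 (Or.inr rfl)
  have hcont : ContinuousOn k₂ (Set.Ici Y) := hcont.mono fun y hy => (hY y hy).1
  refine ⟨Y, hκ, fun y hy => (hY y hy).2.2.1, fun y hy x hx hxk => ?_, hzero,
    fun y hy x hx => ?_, hcont, hlim⟩
  · obtain ⟨hYy, hk₁y, -, hu0⟩ := hY y hy
    by_contra! hneg
    obtain ⟨z, hz, huz⟩ := intermediate_value_Icc' hx
      (hu.horizontal y).differentiable.continuous.continuousOn ⟨hneg, hu0.le⟩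
    rcases (Set.ext_iff.1 (hlevel y hYy) z).1 huz with rfl | rfl
    · exact hk₁y.not_ge hz.1
    · exact hxk.not_ge hz.2
  · obtain ⟨z, hxz, hyz⟩ := ((hk₂.eventually_ge_atTop x).and (eventually_ge_atTop y)).exists
    obtain ⟨y', hy', rfl⟩ := intermediate_value_Icc hyz
      (hcont.mono fun t ht => hy.trans ht.1) ⟨hx.le, hxz⟩
    have hlt : y < y' := hy'.1.lt_of_ne (by rintro rfl; exact hx.ne rfl)
    exact hzero y' (hy.trans hy'.1) ▸ hu.strictMono _ hlt

theorem RegularWave.exists_rightBranch_reflect (hu : RegularWave f c K u) (hκ : 0 < κ)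
    (hcont : ContinuousOn k₁ (Set.Ioi Y₀))
    (hlevel : ∀ y, Y₀ < y → {x | u x y = 0} = {k₁ y, k₂ y}) (hk₂ : Tendsto k₂ atTop atTop)
    (hlim : Tendsto (fun y => k₁ y + κ * log y) atTop (𝓝 C)) (a : ℝ) :
    ∃ Y, RightBranch (fun x y => u (a - x) y) (fun y => a - k₁ y) κ (a - C) Y := by
  have hbot : Tendsto (fun y => a - k₂ y) atTop atBot := by
    simpa only [sub_eq_add_neg, Function.comp_def] using
      tendsto_atBot_add_const_left _ a (tendsto_neg_atTop_atBot.comp hk₂)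
  refine (hu.reflect a).exists_rightBranch hκ (continuousOn_const.sub hcont) (fun y hy => ?_) hbot
    ((hlim.const_sub a).congr fun y => sub_add_eq_sub_sub _ _ _)
  ext x
  have hswap (t : ℝ) : x = a - t ↔ a - x = t := by
    rw [eq_sub_iff_add_eq, sub_eq_iff_eq_add']
    exact eq_comm
  have hmem := Set.ext_iff.1 (hlevel y hy) (a - x)
  simp only [Set.mem_ofPred_eq, Set.mem_insert_iff, Set.mem_singleton_iff] at hmem ⊢
  rw [hmem, or_comm, hswap, hswap]

end LevelSet

theorem csInf_eq_of_Ioi_subset_of_subset_Ici {S : Set ℝ} {a : ℝ} (hIoi : Set.Ioi a ⊆ S)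
    (hIci : S ⊆ Set.Ici a) : sInf S = a :=
  le_antisymm ((csInf_le_csInf ⟨a, hIci⟩ Set.nonempty_Ioi hIoi).trans_eq csInf_Ioi)
    (le_csInf (Set.nonempty_Ioi.mono hIoi) hIci)

theorem critical_moving_plane_position_general (F : ℝ → ℝ) (hF : BalancedDoubleWell F) (c : ℝ)
    (u : ℝ → ℝ → ℝ) (hu : IsTravelingWave F c u) (Y₀ : ℝ) (k₁ k₂ : ℝ → ℝ)
    (hk₁ : ContinuousOn k₁ (Set.Ioi Y₀)) (hk₂ : ContinuousOn k₂ (Set.Ioi Y₀))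
    (hlevel : ∀ y, Y₀ < y → {x | u x y = 0} = {k₁ y, k₂ y}) (κ : ℝ) (hκ : 0 < κ) (C₁ C₂ : ℝ)
    (hC₁ : Tendsto (fun y => k₁ y + κ * log y) atTop (𝓝 C₁))
    (hC₂ : Tendsto (fun y => k₂ y - κ * log y) atTop (𝓝 C₂)) :
    sInf {lam : ℝ | ∀ x y : ℝ, lam < x → u x y < u (2 * lam - x) y} = (C₁ + C₂) / 2 := by
  obtain ⟨K, hwave⟩ := hu.exists_regularWave hF
  have hk₂top := tendsto_atTop_of_tendsto_sub_log hκ hC₂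
  have hk₁bot : Tendsto k₁ atTop atBot := by
    simpa using hC₁.add_atBot (tendsto_neg_atTop_atBot.comp (tendsto_log_atTop.const_mul_atTop hκ))
  obtain ⟨Y, hk⟩ := hwave.exists_rightBranch hκ hk₂ hlevel hk₁bot hC₂
  have hreflect (lam : ℝ) := hwave.exists_rightBranch_reflect hκ hk₁ hlevel hk₂top hC₁ (2 * lam)
  refine csInf_eq_of_Ioi_subset_of_subset_Ici (fun lam hlam x y hx => ?_) fun lam hlam => ?_
  · obtain ⟨_, hk'⟩ := hreflect lam
    have hlam : C₂ < 2 * lam - C₁ := by linarith [Set.mem_Ioi.1 hlam]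
    exact hwave.lt_of_rightBranch_lt (hwave.reflect (2 * lam)) hF hk hk' hlam
      (fun y => by rw [two_mul, add_sub_cancel_right]) hx y
  · obtain ⟨_, hk'⟩ := hreflect lam
    have hle : C₂ ≤ 2 * lam - C₁ := hk.le_of_forall_lt hk' hlam
    rw [Set.mem_Ici]
    linarith

/-- The critical moving-plane position equals `(C₁ + C₂)/2`, where `C₁, C₂`
are the constants in the logarithmic asymptotics of the two branches of the
zero level set (Lemma 2.10). -/
theorem critical_moving_plane_position
    (F : ℝ → ℝ) (hF : BalancedDoubleWell F) (c : ℝ) (hc : 0 < c)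
    (u : ℝ → ℝ → ℝ) (hu : IsTravelingWave F c u)
    (Y₀ : ℝ) (hY₀ : 0 < Y₀) (k₁ k₂ : ℝ → ℝ)
    (hk₁ : ContDiffOn ℝ 3 k₁ (Set.Ioi Y₀)) (hk₂ : ContDiffOn ℝ 3 k₂ (Set.Ioi Y₀))
    (hlevel : ∀ y : ℝ, Y₀ < y → k₁ y < k₂ y ∧ {x : ℝ | u x y = 0} = {k₁ y, k₂ y})
    (C₁ C₂ : ℝ)
    (hC₁ : Tendsto (fun y =>
        k₁ y + (1 / (2 * Real.sqrt (deriv (deriv F) 1))) * Real.log y)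
        atTop (nhds C₁))
    (hC₂ : Tendsto (fun y =>
        k₂ y - (1 / (2 * Real.sqrt (deriv (deriv F) 1))) * Real.log y)
        atTop (nhds C₂)) :
    sInf {lam : ℝ | ∀ x y : ℝ, lam < x → u x y < u (2 * lam - x) y} =
      (C₁ + C₂) / 2 :=
  critical_moving_plane_position_general F hF c u hu Y₀ k₁ k₂ hk₁.continuousOn hk₂.continuousOn
    (fun y hy => (hlevel y hy).2) _
    (one_div_pos.2 (mul_pos two_pos (sqrt_pos.2 hF.2.2.2.2.1))) C₁ C₂ hC₁ hC₂
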